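/- arXiv:2008.13393 — 2 statements merged into one kernel-verified Lean document; each statement's English description precedes it below -/
import Mathlib

section
/- Let X be a separable complex Banach space, T a bounded linear operator on X, and Λ a nonempty subset of ℂ. Assume there exist a dense subset X₀ ⊆ X and a mapping S : X₀ → X₀ such that T(S(x)) = x for all x ∈ X₀. If the set {|λ| : λ ∈ Λ} is a countable relatively compact subset of (a_T(X₀,S), b_T(X₀,S)), then ⋂_{λ∈Λ} FHC(λT) ≠ ∅. Moreover, if the set {|λ|^{1/p} : p ∈ ℕ, p ≥ 1, λ ∈ Λ} is a countable relatively compact subset of (a_T(X₀,S), b_T(X₀,S)), then ⋂_{λ∈Λ, p≥1} FHC(λT^p) ≠ ∅. -/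
open Filter Topology
open scoped ENNReal NNReal

/-- Lower density of a set of natural numbers. -/
noncomputable def lowerDensity (E : Set ℕ) : ℝ :=
  Filter.liminf (fun n : ℕ =>
    (∑ k ∈ Finset.range (n + 1), Set.indicator E (fun _ => (1 : ℝ)) k) / ((n : ℝ) + 1))
    Filter.atTop

/-- The set of frequently hypercyclic vectors of an operator. -/
noncomputable def FHC {X : Type*} [NormedAddCommGroup X] [NormedSpace ℂ X]
    (T : X →L[ℂ] X) : Set X :=
  {x | ∀ U : Set X, IsOpen U → U.Nonempty → 0 < lowerDensity {n : ℕ | (T ^ n) x ∈ U}}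

/-- `a_T(X₀,S) = sup_{x ∈ X₀} limsup_n ‖Sⁿx‖^{1/n}`, computed in `ℝ≥0∞`. -/
noncomputable def aT {X : Type*} [NormedAddCommGroup X] (X₀ : Set X) (S : X₀ → X₀) : ℝ≥0∞ :=
  ⨆ x : X₀, Filter.limsup
    (fun n : ℕ => (‖((S^[n] x : X₀) : X)‖₊ : ℝ≥0∞) ^ (1 / (n : ℝ))) Filter.atTop

/-- `b_T(X₀,S) = inf_{x ∈ X₀} (limsup_n ‖Tⁿx‖^{1/n})⁻¹`, computed in `ℝ≥0∞`. -/
noncomputable def bT {X : Type*} [NormedAddCommGroup X] [NormedSpace ℂ X]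
    (T : X →L[ℂ] X) (X₀ : Set X) : ℝ≥0∞ :=
  ⨅ x : X₀, (Filter.limsup
    (fun n : ℕ => (‖(T ^ n) (x : X)‖₊ : ℝ≥0∞) ^ (1 / (n : ℝ))) Filter.atTop)⁻¹

/-!
Rescaling by `r ^ k`, the two-sided orbit `…, S y, y, T y, …` of any `y ∈ X₀` decays geometrically
in both directions, uniformly for `r` in a compact subset of `(a_T, b_T)`. Assign times to
countably many classes, one for each modulus `r`, each `y` in a countable dense set and each
precision `N`: the class of `j` governs the slot `[Q ^ j, 2 * Q ^ j)`, and every class receives a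
syndetic set of `j`. Planting `r ^ (-n) • S ^ n y` at the times `n` of the slots of `(r, y, N)`
that are multiples of `N`, the resulting sum `x` satisfies `r ^ m • T ^ m x ≈ y` at those times:
terms of the same class are at distance at least `N`, and different slots are so far apart that
the decay outweighs the ratios of the moduli. Finally, for `|l| = r ^ p` the phase of
`(l / r ^ p) ^ n` is close to one for syndetically many `n`, and since the slots grow
geometrically, a syndetic set meets syndetically many of them in positive lower density.
-/

section LowerDensity

lemma sum_range_indicator_one_eq_ncard (E : Set ℕ) (n : ℕ) :
    ∑ k ∈ Finset.range (n + 1), E.indicator (fun _ => (1 : ℝ)) k = (E ∩ Set.Iic n).ncard := by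
  classical
  have hcoe : E ∩ Set.Iic n = ({k ∈ Finset.range (n + 1) | k ∈ E} : Finset ℕ) := by
    ext k
    simp [and_comm]
  rw [hcoe, Set.ncard_coe_finset, Finset.card_filter]
  simp [Set.indicator_apply]

lemma ncard_inter_Iic_le (E : Set ℕ) (n : ℕ) : (E ∩ Set.Iic n).ncard ≤ n + 1 := by
  simpa [← Set.Iio_succ_eq_Iic] using
    Set.ncard_le_ncard (Set.inter_subset_right : E ∩ Set.Iic n ⊆ _) (Set.finite_Iic n)

lemma le_lowerDensity {E : Set ℕ} {κ : ℝ}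
    (h : ∀ᶠ n : ℕ in atTop, κ * (n + 1) ≤ (E ∩ Set.Iic n).ncard) : κ ≤ lowerDensity E := by
  simp only [lowerDensity, sum_range_indicator_one_eq_ncard]
  refine le_liminf_of_le (IsBounded.isCobounded_ge (isBoundedUnder_of ⟨1, fun n => ?_⟩)) ?_
  · exact div_le_one_of_le₀ (mod_cast ncard_inter_Iic_le E n) (by positivity)
  · filter_upwards [h] with n hn
    exact (le_div_iff₀ (by positivity)).2 hn

lemma lowerDensity_pos_of_eventually_le {E : Set ℕ} {a b : ℕ}
    (h : ∀ᶠ n in atTop, n ≤ a * (E ∩ Set.Iic n).ncard + b) : 0 < lowerDensity E := by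
  have hκ : (0 : ℝ) < 1 / (2 * (a + 1)) := by positivity
  refine hκ.trans_le (le_lowerDensity ?_)
  filter_upwards [h, eventually_ge_atTop (2 * b + 1)] with n hn hbn
  have hcount : n + 1 ≤ 2 * (a + 1) * (E ∩ Set.Iic n).ncard := by nlinarith
  rw [one_div, inv_mul_le_iff₀ (by positivity)]
  exact_mod_cast hcount

end LowerDensity

/-- A set of natural numbers is syndetic if its gaps are bounded: for some `G` it meets every
window `[t, t + G)`. Syndetic sets supply both the return times and the time slots below. -/
def IsSyndetic (E : Set ℕ) : Prop :=
  ∃ G : ℕ, ∀ t, (E ∩ Set.Ico t (t + G)).Nonempty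

namespace IsSyndetic

lemma mono {E F : Set ℕ} (hE : IsSyndetic E) (hEF : E ⊆ F) : IsSyndetic F := by
  obtain ⟨G, hG⟩ := hE
  exact ⟨G, fun t => (hG t).mono (Set.inter_subset_inter_left _ hEF)⟩

lemma image_mul_left {E : Set ℕ} (hE : IsSyndetic E) {k : ℕ} (hk : 0 < k) :
    IsSyndetic ((k * ·) '' E) := by
  obtain ⟨G, hG⟩ := hE
  refine ⟨k * G + 1, fun t => ?_⟩
  obtain ⟨s, hsE, hts, hsG⟩ := hG (t / k + 1)
  refine ⟨k * s, Set.mem_image_of_mem _ hsE, ?_, ?_⟩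
  · calc t ≤ k * (t / k + 1) := (Nat.lt_mul_div_succ t hk).le
      _ ≤ k * s := Nat.mul_le_mul_left k hts
  · have hs : k * s ≤ k * (t / k + G) := Nat.mul_le_mul_left k (by omega)
    have ht : k * (t / k) ≤ t := Nat.mul_div_le t k
    rw [mul_add] at hs
    omega

lemma inter_Ici {E : Set ℕ} (hE : IsSyndetic E) (n₀ : ℕ) : IsSyndetic (E ∩ Set.Ici n₀) := by
  obtain ⟨G, hG⟩ := hE
  refine ⟨n₀ + G, fun t => ?_⟩
  obtain ⟨s, hsE, hts, hsG⟩ := hG (t + n₀)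
  exact ⟨s, ⟨hsE, by simp only [Set.mem_Ici]; omega⟩, by omega, by omega⟩

end IsSyndetic

lemma div_le_ncard_inter_Ico {E : Set ℕ} {G : ℕ}
    (hG : ∀ t, (E ∩ Set.Ico t (t + G)).Nonempty) (a b : ℕ) :
    (b - a) / G ≤ (E ∩ Set.Ico a b).ncard := by
  have hsurj : Set.Iio ((b - a) / G) ⊆ (fun s => (s - a) / G) '' (E ∩ Set.Ico a b) := by
    intro i hi
    obtain ⟨s, hsE, his, hsi⟩ := hG (a + i * G)
    have hiG : (i + 1) * G ≤ b - a :=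
      (Nat.mul_le_mul_right G hi).trans (Nat.div_mul_le_self (b - a) G)
    rw [add_mul, one_mul] at hiG
    refine ⟨s, ⟨hsE, by omega, by omega⟩, ?_⟩
    exact Nat.div_eq_of_lt_le (by omega) (by rw [add_mul, one_mul]; omega)
  have hfin : (E ∩ Set.Ico a b).Finite := (Set.finite_Ico a b).inter_of_right E
  simpa using (Set.ncard_le_ncard hsurj (hfin.image _)).trans (Set.ncard_image_le hfin)

lemma isSyndetic_setOf_padicValNat_eq (p : ℕ) [hp : Fact p.Prime] (c : ℕ) :
    IsSyndetic {j | padicValNat p j = c} := by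
  have hunits : IsSyndetic {u | ¬ p ∣ u} := by
    refine ⟨2, fun t => ?_⟩
    by_cases ht : p ∣ t
    · refine ⟨t + 1, fun ht' => hp.out.one_lt.ne' ?_, by simp⟩
      exact Nat.dvd_one.1 ((Nat.dvd_add_right ht).1 ht')
    · exact ⟨t, ht, by simp⟩
  refine (hunits.image_mul_left (pow_pos hp.out.pos c)).mono ?_
  rintro _ ⟨u, hu, rfl⟩
  have hu₀ : u ≠ 0 := by
    rintro rfl
    exact hu (dvd_zero p)
  rw [Set.mem_ofPred_eq, padicValNat.mul (pow_ne_zero _ hp.out.ne_zero) hu₀, padicValNat.prime_pow,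
    padicValNat.eq_zero_of_not_dvd hu, add_zero]

lemma exists_forall_isSyndetic_preimage_singleton (ι : Type*) [Countable ι] [Nonempty ι] :
    ∃ f : ℕ → ι, ∀ i, IsSyndetic (f ⁻¹' {i}) := by
  obtain ⟨φ, hφ⟩ := exists_surjective_nat ι
  refine ⟨fun j => φ (padicValNat 2 j), fun i => ?_⟩
  obtain ⟨c, rfl⟩ := hφ i
  exact (isSyndetic_setOf_padicValNat_eq 2 c).mono fun j hj => congrArg φ hj

lemma isSyndetic_setOf_norm_pow_sub_one_lt {𝕜 : Type*} [NormedField 𝕜] [ProperSpace 𝕜] {z : 𝕜}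
    (hz : ‖z‖ = 1) {ε : ℝ} (hε : 0 < ε) : IsSyndetic {n : ℕ | ‖z ^ n - 1‖ < ε} := by
  have htb : TotallyBounded (Set.range fun n : ℕ => z ^ n) := by
    refine (isCompact_sphere (0 : 𝕜) 1).totallyBounded.subset ?_
    rintro _ ⟨n, rfl⟩
    simp [hz]
  obtain ⟨F, hF, hFfin, hcov⟩ := Metric.finite_approx_of_totallyBounded htb ε hε
  have hF' : ∀ w ∈ F, ∃ n : ℕ, z ^ n = w := fun w hw => hF hw
  choose! g hg using hF'
  obtain ⟨B, hB⟩ := (hFfin.image g).bddAbove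
  refine ⟨B + 1, fun t => ?_⟩
  obtain ⟨w, hwF, hw⟩ := Set.mem_iUnion₂.1 (hcov ⟨t + B, rfl⟩)
  have hgw : g w ≤ B := hB (Set.mem_image_of_mem g hwF)
  refine ⟨t + B - g w, ?_, by simp only [Set.mem_Ico]; omega⟩
  have hfactor : z ^ (t + B) - z ^ g w = z ^ g w * (z ^ (t + B - g w) - 1) := by
    rw [mul_sub, ← pow_add, mul_one, Nat.add_sub_cancel' (by omega)]
  rwa [Metric.mem_ball, dist_eq_norm, ← hg w hwF, hfactor, norm_mul, norm_pow, hz, one_pow,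
    one_mul] at hw

lemma isSyndetic_setOf_dvd_and_norm_pow_sub_one_lt {𝕜 : Type*} [NormedField 𝕜] [ProperSpace 𝕜]
    {z : 𝕜} (hz : ‖z‖ = 1) {k : ℕ} (hk : 0 < k) {ε : ℝ} (hε : 0 < ε) :
    IsSyndetic {n : ℕ | k ∣ n ∧ ‖z ^ n - 1‖ < ε} := by
  have hzk : ‖z ^ k‖ = 1 := by rw [norm_pow, hz, one_pow]
  refine ((isSyndetic_setOf_norm_pow_sub_one_lt hzk hε).image_mul_left hk).mono ?_
  rintro _ ⟨n, hn, rfl⟩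
  exact ⟨dvd_mul_right k n, by rwa [pow_mul]⟩

/-- The union of the slots `[Q ^ j, 2 * Q ^ j)` over `j ∈ J`. A time `m` in a slot has
`j = Nat.log Q m`, and distinct slots are far apart when `Q` is large. -/
def slots (Q : ℕ) (J : Set ℕ) : Set ℕ := ⋃ j ∈ J, Set.Ico (Q ^ j) (2 * Q ^ j)

section Slots

variable {Q m n : ℕ} {J : Set ℕ}

lemma mem_slots_iff (hQ : 2 ≤ Q) :
    m ∈ slots Q J ↔ m ≠ 0 ∧ Nat.log Q m ∈ J ∧ m < 2 * Q ^ Nat.log Q m := by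
  simp only [slots, Set.mem_iUnion, Set.mem_Ico, exists_prop]
  constructor
  · rintro ⟨j, hj, hjm, hmj⟩
    have hpos : 0 < Q ^ j := by positivity
    have hlog : Nat.log Q m = j :=
      Nat.log_eq_of_pow_le_of_lt_pow hjm (hmj.trans_le (by rw [pow_succ']; gcongr))
    rw [hlog]
    exact ⟨by omega, hj, hmj⟩
  · rintro ⟨hm, hj, hmj⟩
    exact ⟨Nat.log Q m, hj, Nat.pow_log_le_self Q hm, hmj⟩

lemma mul_le_two_mul_of_log_lt (hQ : 2 ≤ Q) (hm : m ∈ slots Q J) (hn : n ≠ 0)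
    (hmn : Nat.log Q m < Nat.log Q n) : Q * m ≤ 2 * n := by
  have hm' : m < 2 * Q ^ Nat.log Q m := ((mem_slots_iff hQ).1 hm).2.2
  calc Q * m ≤ Q * (2 * Q ^ Nat.log Q m) := by gcongr
    _ = 2 * Q ^ (Nat.log Q m + 1) := by ring
    _ ≤ 2 * Q ^ Nat.log Q n := by
        gcongr
        · omega
        · exact hmn
    _ ≤ 2 * n := by
        gcongr
        exact Nat.pow_log_le_self Q hn

end Slots

lemma IsSyndetic.exists_eventually_pow_succ_le {J : Set ℕ} (hJ : IsSyndetic J) {Q : ℕ}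
    (hQ : 2 ≤ Q) :
    ∃ A, ∀ᶠ n in atTop, ∃ j ∈ J, Q ^ (j + 1) ≤ n ∧ n < A * Q ^ j := by
  obtain ⟨H, hH⟩ := hJ
  refine ⟨Q ^ (H + 1), ?_⟩
  filter_upwards [eventually_ge_atTop (Q ^ H)] with n hn
  have hn₀ : n ≠ 0 := ((pow_pos (by omega) H).trans_le hn).ne'
  have hHn : H ≤ Nat.log Q n := Nat.le_log_of_pow_le (by omega) hn
  obtain ⟨j, hjJ, hj, hjn⟩ := hH (Nat.log Q n - H)
  refine ⟨j, hjJ, ?_, ?_⟩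
  · exact (Nat.pow_le_pow_right (by omega) (by omega)).trans (Nat.pow_log_le_self Q hn₀)
  · rw [← pow_add]
    exact (Nat.lt_pow_succ_log_self (by omega) n).trans_le
      (Nat.pow_le_pow_right (by omega) (by omega))

lemma le_mul_ncard_mul_mem_Ico_add {F : Set ℕ} {G p : ℕ}
    (hG : ∀ t, (F ∩ Set.Ico t (t + G)).Nonempty) (hp : 0 < p) (B : ℕ) :
    B ≤ p * G * {n | n ∈ F ∧ p * n ∈ Set.Ico B (2 * B)}.ncard + (p * G + 2 * p) := by
  have hG₀ : 0 < G := by simpa using Set.nonempty_Ico.1 ((hG 0).mono Set.inter_subset_right)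
  have hBlt : B < p * (B / p + 1) := Nat.lt_mul_div_succ B hp
  have hleB : p * (B / p) ≤ B := Nat.mul_div_le B p
  have h2Blt : 2 * B < p * (2 * B / p + 1) := Nat.lt_mul_div_succ (2 * B) hp
  have hle2B : p * (2 * B / p) ≤ 2 * B := Nat.mul_div_le (2 * B) p
  generalize B / p = u, 2 * B / p = v at *
  have hsub : F ∩ Set.Ico (u + 1) v ⊆ {n | n ∈ F ∧ p * n ∈ Set.Ico B (2 * B)} :=
    fun n ⟨hnF, hun, hnv⟩ => ⟨hnF, hBlt.le.trans (Nat.mul_le_mul_left p hun),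
      (Nat.mul_lt_mul_of_pos_left hnv hp).trans_le hle2B⟩
  have hfin : {n | n ∈ F ∧ p * n ∈ Set.Ico B (2 * B)}.Finite :=
    (Set.finite_Iio (2 * B)).subset fun n hn =>
      (Nat.le_mul_of_pos_left n hp).trans_lt hn.2.2
  set W := {n | n ∈ F ∧ p * n ∈ Set.Ico B (2 * B)}.ncard
  have hW : (v - (u + 1)) / G ≤ W :=
    (div_le_ncard_inter_Ico hG _ _).trans (Set.ncard_le_ncard hsub hfin)
  have hlen : v + 1 ≤ G * (W + 1) + (u + 2) := by
    have hlt : v - (u + 1) < G * (W + 1) :=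
      (Nat.lt_mul_div_succ _ hG₀).trans_le (by gcongr)
    omega
  have hplen := Nat.mul_le_mul_left p hlen
  linarith

lemma IsSyndetic.lowerDensity_pos_of_subset {F J : Set ℕ} (hF : IsSyndetic F)
    (hJ : IsSyndetic J) {Q p : ℕ} (hQ : 2 ≤ Q) (hp : 0 < p) {E : Set ℕ}
    (hE : {n | n ∈ F ∧ p * n ∈ slots Q J} ⊆ E) : 0 < lowerDensity E := by
  obtain ⟨G, hG⟩ := hF
  obtain ⟨A, hA⟩ := hJ.exists_eventually_pow_succ_le hQ
  refine lowerDensity_pos_of_eventually_le (a := A * (p * G)) (b := A * (p * G + 2 * p)) ?_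
  filter_upwards [hA] with n ⟨j, hjJ, hjn, hnj⟩
  have hslot : {k | k ∈ F ∧ p * k ∈ Set.Ico (Q ^ j) (2 * Q ^ j)} ⊆
      E ∩ Set.Iic n := by
    rintro k ⟨hkF, hjk, hkj⟩
    refine ⟨hE ⟨hkF, Set.mem_biUnion hjJ ⟨hjk, hkj⟩⟩, ?_⟩
    calc k ≤ p * k := Nat.le_mul_of_pos_left k hp
      _ ≤ 2 * Q ^ j := hkj.le
      _ ≤ Q ^ (j + 1) := by rw [pow_succ']; gcongr
      _ ≤ n := hjn
  calc n ≤ A * Q ^ j := hnj.le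
    _ ≤ A * (p * G * {k | k ∈ F ∧ p * k ∈ Set.Ico (Q ^ j) (2 * Q ^ j)}.ncard +
        (p * G + 2 * p)) := by gcongr; exact le_mul_ncard_mul_mem_Ico_add hG hp _
    _ = A * (p * G) * {k | k ∈ F ∧ p * k ∈ Set.Ico (Q ^ j) (2 * Q ^ j)}.ncard +
        A * (p * G + 2 * p) := by ring
    _ ≤ _ := by
        gcongr
        exact (Set.finite_Iic n).inter_of_right _

section Summation

lemma summable_pow_natAbs {σ : ℝ} (hσ₀ : 0 ≤ σ) (hσ₁ : σ < 1) :
    Summable fun k : ℤ => σ ^ k.natAbs := by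
  have hgeom := summable_geometric_of_lt_one hσ₀ hσ₁
  exact Summable.of_nat_of_neg (by simpa using hgeom) (by simpa using hgeom)

lemma pow_four_mul_mul_pow_le {σ D : ℝ} (hσ₀ : 0 < σ) (hσ₁ : σ < 1) (hD : 0 ≤ D) {K a d : ℕ}
    (hK : 1 ≤ K) (hDK : D * σ ^ K ≤ 1) (had : K * a ≤ d) :
    σ ^ (4 * d) * D ^ a ≤ σ ^ (2 * a + d) := by
  have hdecay : σ ^ d * D ^ a ≤ 1 := by
    calc σ ^ d * D ^ a ≤ σ ^ (K * a) * D ^ a := by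
          gcongr ?_ * _
          exact pow_le_pow_of_le_one hσ₀.le hσ₁.le had
      _ = (D * σ ^ K) ^ a := by ring
      _ ≤ 1 := pow_le_one₀ (by positivity) hDK
  calc σ ^ (4 * d) * D ^ a = σ ^ (3 * d) * (σ ^ d * D ^ a) := by ring
    _ ≤ σ ^ (3 * d) := mul_le_of_le_one_right (by positivity) hdecay
    _ ≤ σ ^ (2 * a + d) := pow_le_pow_of_le_one hσ₀.le hσ₁.le (by nlinarith)

end Summation

section Orbits

variable {𝕜 X : Type*} [NormedField 𝕜] [NormedAddCommGroup X] [NormedSpace 𝕜 X]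
  {T : X →L[𝕜] X}

lemma pow_apply_of_forall_apply {b : ℤ → X} (hb : ∀ k, T (b k) = b (k + 1)) (m : ℕ) (k : ℤ) :
    (T ^ m) (b k) = b (m + k) := by
  induction m with
  | zero => simp
  | succ m ih =>
    rw [pow_succ', mul_apply_eq_comp, ih, hb]
    congr 1
    push_cast
    ring

lemma norm_smul_pow_apply_smul_le {b : ℤ → X} (hb : ∀ k, T (b k) = b (k + 1)) {w w' : 𝕜}
    (hw : w ≠ 0) (hw' : w' ≠ 0) (m n : ℕ) {A : ℝ}
    (hA : ‖b (m - n)‖ ≤ A * ‖w‖ ^ (n - m : ℤ)) (hA' : ‖b (m - n)‖ ≤ A * ‖w'‖ ^ (n - m : ℤ)) :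
    ‖w ^ m • (T ^ m) ((w' ^ n)⁻¹ • b (-n))‖ ≤ A * (‖w‖ / ‖w'‖) ^ min m n := by
  have hw₀ : 0 < ‖w‖ := norm_pos_iff.2 hw
  have hw'₀ : 0 < ‖w'‖ := norm_pos_iff.2 hw'
  rw [map_smul, pow_apply_of_forall_apply hb, norm_smul, norm_smul, norm_inv, norm_pow, norm_pow,
    ← sub_eq_add_neg]
  rcases min_choice m n with hmin | hmin <;> rw [hmin]
  · calc ‖w‖ ^ m * ((‖w'‖ ^ n)⁻¹ * ‖b (m - n)‖)
        ≤ ‖w‖ ^ m * ((‖w'‖ ^ n)⁻¹ * (A * ‖w'‖ ^ (n - m : ℤ))) := by gcongr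
      _ = A * (‖w‖ / ‖w'‖) ^ m := by
          rw [zpow_sub₀ hw'₀.ne', zpow_natCast, zpow_natCast, div_pow]
          field_simp
  · calc ‖w‖ ^ m * ((‖w'‖ ^ n)⁻¹ * ‖b (m - n)‖)
        ≤ ‖w‖ ^ m * ((‖w'‖ ^ n)⁻¹ * (A * ‖w‖ ^ (n - m : ℤ))) := by gcongr
      _ = A * (‖w‖ / ‖w'‖) ^ n := by
          rw [zpow_sub₀ hw₀.ne', zpow_natCast, zpow_natCast, div_pow]
          field_simp

/-- A family of two-sided orbits `b i` of `T` such that `‖b i k‖` decays like `q ^ |k|`, up to a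
constant `C i`, after rescaling by any of the weights `w j`; one and the same orbit thus serves
all the operators `w j • T`. -/
structure IsGeometricOrbitFamily {ι κ : Type*} (T : X →L[𝕜] X) (b : ι → ℤ → X) (w : κ → 𝕜)
    (C : ι → ℝ) (q : ℝ) : Prop where
  apply_eq : ∀ i k, T (b i k) = b i (k + 1)
  weight_ne_zero : ∀ j, w j ≠ 0
  norm_le : ∀ i j k, ‖b i k‖ ≤ C i * q ^ k.natAbs * ‖w j‖ ^ (-k)

lemma IsGeometricOrbitFamily.comp {ι κ μ : Type*} {b : ι → ℤ → X} {w : κ → 𝕜} {C : ι → ℝ} {q : ℝ}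
    (hb : IsGeometricOrbitFamily T b w C q) (f : μ → ι) (g : μ → κ) :
    IsGeometricOrbitFamily T (b ∘ f) (w ∘ g) (C ∘ f) q where
  apply_eq i := hb.apply_eq (f i)
  weight_ne_zero j := hb.weight_ne_zero (g j)
  norm_le i j := hb.norm_le (f i) (g j)

/-- A set `A` of times, each assigned to a class by `cls`. The times of class `i` are multiples
of `N i` and at least `C i`, and times `m`, `n` of different classes are so far apart that
`|m - n|` is at least `K` times the smaller of the two. -/
structure IsSchedule {ι : Type*} (A : Set ℕ) (cls : ℕ → ι) (N : ι → ℕ) (C : ι → ℝ) (K : ℕ) :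
    Prop where
  const_le : ∀ n ∈ A, C (cls n) ≤ n
  dvd : ∀ n ∈ A, N (cls n) ∣ n
  separated : ∀ m ∈ A, ∀ n ∈ A, cls m ≠ cls n → K * min m n ≤ (m - n : ℤ).natAbs

variable {ι : Type*} {b : ι → ℤ → X} {w : ι → 𝕜} {C : ι → ℝ} {σ : ℝ}
  {A : Set ℕ} {cls : ℕ → ι} {N : ι → ℕ} {K : ℕ}

lemma IsGeometricOrbitFamily.const_nonneg {q : ℝ} (hb : IsGeometricOrbitFamily T b w C q)
    (i : ι) : 0 ≤ C i := by
  simpa using (norm_nonneg _).trans (hb.norm_le i i 0)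

lemma IsGeometricOrbitFamily.norm_smul_pow_apply_le {q : ℝ}
    (hb : IsGeometricOrbitFamily T b w C q) (i i' : ι) (m n : ℕ) :
    ‖w i ^ m • (T ^ m) ((w i' ^ n)⁻¹ • b i' (-n))‖ ≤
      C i' * q ^ (m - n : ℤ).natAbs * (‖w i‖ / ‖w i'‖) ^ min m n :=
  norm_smul_pow_apply_smul_le (hb.apply_eq i') (hb.weight_ne_zero i) (hb.weight_ne_zero i') m n
    (by simpa using hb.norm_le i' i (m - n)) (by simpa using hb.norm_le i' i' (m - n))

/-- The term of class `cls n` planted at time `n` by the superposition `∑ n ∈ A`. -/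
def plantedTerm (b : ι → ℤ → X) (w : ι → 𝕜) (cls : ℕ → ι) (n : ℕ) : X :=
  (w (cls n) ^ n)⁻¹ • b (cls n) (-n)

lemma smul_pow_apply_plantedTerm_self (hb : ∀ i k, T (b i k) = b i (k + 1))
    (hw : ∀ i, w i ≠ 0) (m : ℕ) :
    w (cls m) ^ m • (T ^ m) (plantedTerm b w cls m) = b (cls m) 0 := by
  rw [plantedTerm, map_smul, smul_inv_smul₀ (pow_ne_zero m (hw _)),
    pow_apply_of_forall_apply (hb _), add_neg_cancel]

/- The fourth power of `σ` is spent as follows. Within a class, `N ∣ m - n` turns one factor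
`σ ^ |m - n|` into `σ ^ N`. Across classes, one factor absorbs the weights and, as
`m + n ≤ 3 * |m - n|`, the other three give `σ ^ n * σ ^ m`. -/
lemma norm_smul_pow_apply_plantedTerm_le (hσ₀ : 0 < σ) (hσ₁ : σ < 1)
    (hb : IsGeometricOrbitFamily T b w C (σ ^ 4)) (hA : IsSchedule A cls N C K) (hK : 1 ≤ K)
    (hwK : ∀ i i', ‖w i‖ / ‖w i'‖ * σ ^ K ≤ 1) {m n : ℕ} (hm : m ∈ A) (hn : n ∈ A)
    (hmn : n ≠ m) :
    ‖w (cls m) ^ m • (T ^ m) (plantedTerm b w cls n)‖ ≤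
      C (cls m) * σ ^ N (cls m) * σ ^ (m - n : ℤ).natAbs + n * σ ^ n * σ ^ m := by
  have hterm := hb.norm_smul_pow_apply_le (cls m) (cls n) m n
  have hC := hb.const_nonneg (cls m)
  refine hterm.trans ?_
  rw [← pow_mul]
  by_cases hcls : cls m = cls n
  · have hdvd : N (cls m) ∣ (m - n : ℤ).natAbs := by
      have hNn : N (cls m) ∣ n := hcls ▸ hA.dvd n hn
      rw [← Int.natCast_dvd]
      exact dvd_sub (Int.natCast_dvd_natCast.2 (hA.dvd m hm)) (Int.natCast_dvd_natCast.2 hNn)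
    have hN : N (cls m) ≤ (m - n : ℤ).natAbs := Nat.le_of_dvd (by omega) hdvd
    have hw : ‖w (cls m)‖ ≠ 0 := norm_ne_zero_iff.2 (hb.weight_ne_zero _)
    rw [← hcls, div_self hw, one_pow, mul_one, mul_assoc, ← pow_add]
    refine le_add_of_le_of_nonneg ?_ (by positivity)
    gcongr C _ * ?_
    exact pow_le_pow_of_le_one hσ₀.le hσ₁.le (by omega)
  · have hsep := hA.separated m hm n hn hcls
    have hsum : 2 * min m n + (m - n : ℤ).natAbs = n + m := by omega
    refine le_add_of_nonneg_of_le (by positivity) ?_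
    rw [mul_assoc, mul_assoc, ← pow_add, ← hsum]
    gcongr
    · exact hA.const_le n hn
    · exact pow_four_mul_mul_pow_le hσ₀ hσ₁ (by positivity) hK (hwK _ _) hsep

lemma summable_natCast_mul_pow (hσ₀ : 0 ≤ σ) (hσ₁ : σ < 1) :
    Summable fun n : ℕ => n * σ ^ n := by
  simpa using summable_pow_mul_geometric_of_norm_lt_one 1
    (by rwa [Real.norm_of_nonneg hσ₀] : ‖σ‖ < 1)

lemma summable_indicator_plantedTerm [CompleteSpace X] (hσ₀ : 0 < σ) (hσ₁ : σ < 1)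
    (hb : IsGeometricOrbitFamily T b w C (σ ^ 4)) (hA : ∀ n ∈ A, C (cls n) ≤ n) :
    Summable (A.indicator (plantedTerm b w cls)) := by
  refine (summable_natCast_mul_pow hσ₀.le hσ₁).of_norm_bounded fun n => ?_
  rw [norm_indicator_eq_indicator_norm]
  by_cases hn : n ∈ A
  swap
  · rw [Set.indicator_of_notMem hn]
    positivity
  rw [Set.indicator_of_mem hn]
  have hterm := hb.norm_smul_pow_apply_le (cls n) (cls n) 0 n
  simp only [pow_zero, one_smul, Nat.cast_zero, zero_sub, Int.natAbs_neg, Int.natAbs_natCast,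
    Nat.zero_min, mul_one, one_apply_eq_self, ← pow_mul] at hterm
  refine hterm.trans ?_
  gcongr ?_ * ?_
  · exact hA n hn
  · exact pow_le_pow_of_le_one hσ₀.le hσ₁.le (by omega)

lemma exists_forall_norm_smul_pow_apply_sub_le [CompleteSpace X] (hσ₀ : 0 < σ) (hσ₁ : σ < 1)
    (hb : IsGeometricOrbitFamily T b w C (σ ^ 4)) (hA : IsSchedule A cls N C K) (hK : 1 ≤ K)
    (hwK : ∀ i i', ‖w i‖ / ‖w i'‖ * σ ^ K ≤ 1) :
    ∃ x : X, ∀ m ∈ A, ‖w (cls m) ^ m • (T ^ m) x - b (cls m) 0‖ ≤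
      C (cls m) * σ ^ N (cls m) * (∑' k : ℤ, σ ^ k.natAbs) + (∑' n : ℕ, n * σ ^ n) * σ ^ m := by
  have hv := summable_indicator_plantedTerm hσ₀ hσ₁ hb hA.const_le
  refine ⟨∑' n, A.indicator (plantedTerm b w cls) n, fun m hm => ?_⟩
  set L : X →L[𝕜] X := w (cls m) ^ m • T ^ m
  have hself : L (A.indicator (plantedTerm b w cls) m) = b (cls m) 0 := by
    rw [Set.indicator_of_mem hm]
    exact smul_pow_apply_plantedTerm_self hb.apply_eq hb.weight_ne_zero m
  have hshift : Function.Injective fun n : ℕ => (m - n : ℤ) := fun n n' h => by simpa using h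
  have hgeom := summable_pow_natAbs hσ₀.le hσ₁
  have hbound := ((hgeom.comp_injective hshift).hasSum.mul_left (C (cls m) * σ ^ N (cls m))).add
    ((summable_natCast_mul_pow hσ₀.le hσ₁).hasSum.mul_right (σ ^ m))
  have hC := hb.const_nonneg (cls m)
  change ‖L _ - _‖ ≤ _
  rw [L.map_tsum hv, (L.summable hv).tsum_eq_add_tsum_ite m, hself, add_sub_cancel_left]
  refine (tsum_of_norm_bounded hbound fun n => ?_).trans ?_
  · dsimp only [Function.comp_apply]
    split_ifs with hnm
    · simp only [norm_zero]
      positivity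
    · by_cases hn : n ∈ A
      · rw [Set.indicator_of_mem hn]
        exact norm_smul_pow_apply_plantedTerm_le hσ₀ hσ₁ hb hA hK hwK hm hn hnm
      · rw [Set.indicator_of_notMem hn, map_zero, norm_zero]
        positivity
  · gcongr
    exact tsum_comp_le_tsum_of_inj hgeom (fun k => by positivity) hshift

end Orbits

lemma mul_min_le_natAbs_sub_of_mem_slots {K Q : ℕ} (hKQ : 2 * (K + 1) ≤ Q) {J : Set ℕ} {m n : ℕ}
    (hm : m ∈ slots Q J) (hn : n ∈ slots Q J) (hmn : Nat.log Q m ≠ Nat.log Q n) :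
    K * min m n ≤ (m - n : ℤ).natAbs := by
  have hQ : 2 ≤ Q := by omega
  have hsep : ∀ a ∈ slots Q J, ∀ b ∈ slots Q J, Nat.log Q a < Nat.log Q b → (K + 1) * a ≤ b := by
    intro a ha b hb hab
    have hQab := mul_le_two_mul_of_log_lt hQ ha ((mem_slots_iff hQ).1 hb).1 hab
    have hKab := (Nat.mul_le_mul_right a hKQ).trans hQab
    rw [mul_assoc] at hKab
    omega
  rcases hmn.lt_or_gt with h | h
  · have hle := hsep m hm n hn h
    have hmin : K * min m n ≤ K * m := Nat.mul_le_mul_left K (min_le_left m n)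
    rw [add_mul, one_mul] at hle
    omega
  · have hle := hsep n hn m hm h
    have hmin : K * min m n ≤ K * n := Nat.mul_le_mul_left K (min_le_right m n)
    rw [add_mul, one_mul] at hle
    omega

lemma exists_isSchedule {ι : Type*} [Countable ι] [Nonempty ι] (N : ι → ℕ) (C : ι → ℝ) (K : ℕ) :
    ∃ A cls Q, 2 ≤ Q ∧ IsSchedule A cls N C K ∧
      ∀ i, ∃ J, IsSyndetic J ∧ ∀ m ∈ slots Q J, N i ∣ m → C i ≤ m → m ∈ A ∧ cls m = i := by
  obtain ⟨f, hf⟩ := exists_forall_isSyndetic_preimage_singleton ι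
  set Q := 2 * (K + 1)
  have hQ : 2 ≤ Q := by omega
  set cls : ℕ → ι := fun m => f (Nat.log Q m)
  refine ⟨{m | m ∈ slots Q Set.univ ∧ N (cls m) ∣ m ∧ C (cls m) ≤ m}, cls, Q, hQ,
    ⟨fun n hn => hn.2.2, fun n hn => hn.2.1, fun m hm n hn hmn => ?_⟩,
    fun i => ⟨f ⁻¹' {i}, hf i, fun m hm hNm hCm => ?_⟩⟩
  · exact mul_min_le_natAbs_sub_of_mem_slots le_rfl hm.1 hn.1 fun h => hmn (congrArg f h)
  · obtain ⟨hm₀, hlog, hlt⟩ := (mem_slots_iff hQ).1 hm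
    have hcls : cls m = i := hlog
    exact ⟨⟨(mem_slots_iff hQ).2 ⟨hm₀, Set.mem_univ _, hlt⟩, by rwa [hcls], by rwa [hcls]⟩, hcls⟩

section SlotHypercyclicity

variable {𝕜 X : Type*} [NormedField 𝕜] [NormedAddCommGroup X] [NormedSpace 𝕜 X]

/-- The weighted orbit `w ^ m • T ^ m x` comes arbitrarily close to every vector throughout
syndetically many slots, along the multiples of some `k > 0`. This is the form of frequent
hypercyclicity of `w • T` that passes to all `l • T ^ p` with `‖l‖ = ‖w‖ ^ p`. -/
def IsSlotHypercyclic (T : X →L[𝕜] X) (Q : ℕ) (w : 𝕜) (x : X) : Prop :=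
  ∀ y : X, ∀ ε > 0, ∃ k > 0, ∃ J, IsSyndetic J ∧
    ∀ᶠ m in atTop, m ∈ slots Q J → k ∣ m → ‖w ^ m • (T ^ m) x - y‖ < ε

namespace IsGeometricOrbitFamily

variable [CompleteSpace X] {T : X →L[𝕜] X} {ι κ : Type*} {b : ι → ℤ → X} {C : ι → ℝ} {σ D : ℝ}

lemma exists_forall_mem_slots_norm_smul_pow_apply_sub_le [Countable ι] [Nonempty ι] {w : ι → 𝕜}
    (hσ₀ : 0 < σ) (hσ₁ : σ < 1) (hb : IsGeometricOrbitFamily T b w C (σ ^ 4))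
    (hD : ∀ i i', ‖w i‖ / ‖w i'‖ ≤ D) (N : ι → ℕ) :
    ∃ x Q, 2 ≤ Q ∧ ∀ i, ∃ J, IsSyndetic J ∧ ∀ m ∈ slots Q J, N i ∣ m → C i ≤ m →
      ‖w i ^ m • (T ^ m) x - b i 0‖ ≤
        C i * σ ^ N i * (∑' k : ℤ, σ ^ k.natAbs) + (∑' n : ℕ, n * σ ^ n) * σ ^ m := by
  obtain ⟨K, hDK, hK⟩ : ∃ K, D * σ ^ K < 1 ∧ 1 ≤ K := by
    have hlim : Tendsto (fun K => D * σ ^ K) atTop (𝓝 0) := by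
      simpa using (tendsto_pow_atTop_nhds_zero_of_lt_one hσ₀.le hσ₁).const_mul D
    exact ((hlim.eventually_lt_const one_pos).and (eventually_ge_atTop 1)).exists
  have hwK : ∀ i i', ‖w i‖ / ‖w i'‖ * σ ^ K ≤ 1 := fun i i' =>
    (mul_le_mul_of_nonneg_right (hD i i') (by positivity)).trans hDK.le
  obtain ⟨A, cls, Q, hQ, hA, hslots⟩ := exists_isSchedule N C K
  obtain ⟨x, hx⟩ := exists_forall_norm_smul_pow_apply_sub_le hσ₀ hσ₁ hb hA hK hwK
  refine ⟨x, Q, hQ, fun i => ?_⟩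
  obtain ⟨J, hJ, hmem⟩ := hslots i
  refine ⟨J, hJ, fun m hm hNm hCm => ?_⟩
  obtain ⟨hmA, rfl⟩ := hmem m hm hNm hCm
  exact hx m hmA

lemma exists_forall_isSlotHypercyclic [Countable ι] [Nonempty ι] [Countable κ] [Nonempty κ]
    {w : κ → 𝕜} (hσ₀ : 0 < σ) (hσ₁ : σ < 1) (hb : IsGeometricOrbitFamily T b w C (σ ^ 4))
    (hdense : DenseRange fun i => b i 0) (hD : ∀ j j', ‖w j‖ / ‖w j'‖ ≤ D) :
    ∃ x Q, 2 ≤ Q ∧ ∀ j, IsSlotHypercyclic T Q (w j) x := by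
  have hσtend := tendsto_pow_atTop_nhds_zero_of_lt_one hσ₀.le hσ₁
  obtain ⟨x, Q, hQ, hx⟩ := exists_forall_mem_slots_norm_smul_pow_apply_sub_le hσ₀ hσ₁
    (hb.comp (fun c : ι × κ × ℕ => c.1) fun c => c.2.1) (fun c c' => hD c.2.1 c'.2.1)
    fun c => c.2.2
  refine ⟨x, Q, hQ, fun j y ε hε => ?_⟩
  obtain ⟨i, hi⟩ := hdense.exists_dist_lt y (by positivity : 0 < ε / 3)
  rw [dist_comm, dist_eq_norm] at hi
  obtain ⟨N, hN, hN₀⟩ :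
      ∃ N, C i * σ ^ N * (∑' k : ℤ, σ ^ k.natAbs) < ε / 3 ∧ 0 < N := by
    have hlim : Tendsto (fun N => C i * σ ^ N * ∑' k : ℤ, σ ^ k.natAbs) atTop (𝓝 0) := by
      simpa using (hσtend.const_mul (C i)).mul_const (∑' k : ℤ, σ ^ k.natAbs)
    exact ((hlim.eventually_lt_const (by positivity)).and (eventually_gt_atTop 0)).exists
  obtain ⟨J, hJ, happrox⟩ := hx (i, j, N)
  refine ⟨N, hN₀, J, hJ, ?_⟩
  have hlim : Tendsto (fun m => (∑' n : ℕ, n * σ ^ n) * σ ^ m) atTop (𝓝 0) := by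
    simpa using hσtend.const_mul (∑' n : ℕ, n * σ ^ n)
  filter_upwards [hlim.eventually_lt_const (by positivity : 0 < ε / 3),
    tendsto_natCast_atTop_atTop.eventually_ge_atTop (C i)] with m hm hCm hmJ hNm
  have hclose := happrox m hmJ hNm hCm
  simp only [Function.comp_apply] at hclose
  calc ‖w j ^ m • (T ^ m) x - y‖ ≤ ‖w j ^ m • (T ^ m) x - b i 0‖ + ‖b i 0 - y‖ :=
        norm_sub_le_norm_sub_add_norm_sub ..
    _ < ε := by linarith

end IsGeometricOrbitFamily

end SlotHypercyclicity

section Biorbit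

variable {𝕜 X : Type*} [NormedField 𝕜] [NormedAddCommGroup X] [NormedSpace 𝕜 X]

/-- The two-sided orbit of `y` under `T`, continued backwards by the right inverse `S` of `T`. -/
def biorbit (T : X →L[𝕜] X) {X₀ : Set X} (S : X₀ → X₀) (y : X₀) (k : ℤ) : X :=
  (T ^ k.toNat) (S^[(-k).toNat] y : X₀)

variable {T : X →L[𝕜] X} {X₀ : Set X} {S : X₀ → X₀}

lemma biorbit_natCast (y : X₀) (n : ℕ) : biorbit T S y n = (T ^ n) y := by
  simp [biorbit]

lemma biorbit_neg_natCast (y : X₀) (n : ℕ) : biorbit T S y (-n) = (S^[n] y : X₀) := by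
  simp [biorbit]

lemma apply_biorbit (hTS : ∀ x : X₀, T (S x) = x) (y : X₀) (k : ℤ) :
    T (biorbit T S y k) = biorbit T S y (k + 1) := by
  rcases le_or_gt 0 k with hk | hk
  · lift k to ℕ using hk
    rw [biorbit_natCast, ← mul_apply_eq_comp, ← pow_succ', ← Nat.cast_succ, biorbit_natCast]
  · obtain ⟨n, rfl⟩ : ∃ n : ℕ, k = -(n + 1 : ℕ) := ⟨(-k - 1).toNat, by omega⟩
    rw [biorbit_neg_natCast, Function.iterate_succ_apply', hTS, Nat.cast_succ, neg_add,
      neg_add_cancel_right, biorbit_neg_natCast]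

lemma norm_biorbit_le {y : X₀} {C q ρ₁ ρ₂ r : ℝ} (hq : 0 ≤ q) (hρ₁ : 0 < ρ₁)
    (hC : 0 ≤ C) (hS : ∀ n, ‖(S^[n] y : X)‖ ≤ C * (q * ρ₁) ^ n)
    (hT : ∀ n, ‖(T ^ n) (y : X)‖ ≤ C * (q / ρ₂) ^ n) (hr : r ∈ Set.Icc ρ₁ ρ₂) (k : ℤ) :
    ‖biorbit T S y k‖ ≤ C * q ^ k.natAbs * r ^ (-k) := by
  have hr₀ : 0 < r := hρ₁.trans_le hr.1
  obtain ⟨n, rfl | rfl⟩ := k.eq_nat_or_neg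
  · rw [biorbit_natCast, Int.natAbs_natCast, zpow_neg, zpow_natCast, mul_assoc, ← inv_pow,
      ← mul_pow, ← div_eq_mul_inv]
    have hρ₂ : 0 < ρ₂ := hr₀.trans_le hr.2
    refine (hT n).trans ?_
    gcongr
    exact hr.2
  · rw [biorbit_neg_natCast, Int.natAbs_neg, Int.natAbs_natCast, neg_neg, zpow_natCast, mul_assoc,
      ← mul_pow]
    refine (hS n).trans ?_
    gcongr
    exact hr.1

end Biorbit

section Growth

lemma exists_forall_norm_le_mul_pow_of_limsup_lt {X : Type*} [SeminormedAddGroup X] {u : ℕ → X}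
    {s : ℝ} (h : limsup (fun n : ℕ => (‖u n‖₊ : ℝ≥0∞) ^ (1 / (n : ℝ))) atTop < ENNReal.ofReal s) :
    ∃ C, ∀ n, ‖u n‖ ≤ C * s ^ n := by
  have hs : 0 < s := ENNReal.ofReal_pos.1 (bot_le.trans_lt h)
  have hu : u =O[atTop] fun n => s ^ n := by
    refine Asymptotics.IsBigO.of_bound 1 ?_
    filter_upwards [eventually_lt_of_limsup_lt h, eventually_gt_atTop 0] with n hn hn₀
    have hn₀' : (0 : ℝ) < n := Nat.cast_pos.2 hn₀
    rw [one_div, ENNReal.rpow_inv_lt_iff hn₀', ENNReal.rpow_natCast,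
      ← ENNReal.ofReal_pow hs.le] at hn
    rw [one_mul, Real.norm_of_nonneg (by positivity)]
    have hn' := ENNReal.toReal_le_of_le_ofReal (by positivity) hn.le
    simpa using hn'
  obtain ⟨C, -, hC⟩ := Asymptotics.bound_of_isBigO_nat_atTop hu
  refine ⟨C, fun n => ?_⟩
  have hCn := hC (pow_ne_zero n hs.ne')
  rwa [Real.norm_of_nonneg (by positivity)] at hCn

variable {X : Type*} [NormedAddCommGroup X] {X₀ : Set X}

lemma exists_forall_norm_iterate_le_of_aT_lt {S : X₀ → X₀} {s : ℝ} (h : aT X₀ S < ENNReal.ofReal s)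
    (y : X₀) : ∃ C, ∀ n, ‖(S^[n] y : X)‖ ≤ C * s ^ n :=
  exists_forall_norm_le_mul_pow_of_limsup_lt ((le_iSup _ y).trans_lt h)

variable [NormedSpace ℂ X] {T : X →L[ℂ] X}

lemma exists_forall_norm_pow_apply_le_of_lt_bT {t : ℝ} (ht : 0 < t)
    (h : ENNReal.ofReal t < bT T X₀) (y : X₀) : ∃ C, ∀ n, ‖(T ^ n) (y : X)‖ ≤ C * t⁻¹ ^ n := by
  refine exists_forall_norm_le_mul_pow_of_limsup_lt ?_
  rw [ENNReal.ofReal_inv_of_pos ht, ENNReal.lt_inv_iff_lt_inv]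
  exact h.trans_le (iInf_le _ y)

lemma exists_lt_ofReal_pow_four_mul_and_ofReal_div_pow_four_lt {a b : ℝ≥0∞} {ρ₁ ρ₂ : ℝ}
    (ha : a < ENNReal.ofReal ρ₁) (hb : ENNReal.ofReal ρ₂ < b) :
    ∃ σ : ℝ, 0 < σ ∧ σ < 1 ∧ a < ENNReal.ofReal (σ ^ 4 * ρ₁) ∧ ENNReal.ofReal (ρ₂ / σ ^ 4) < b := by
  have hmul : Tendsto (fun σ : ℝ => σ ^ 4 * ρ₁) (𝓝[<] 1) (𝓝 ρ₁) := by
    have hcont : ContinuousAt (fun σ : ℝ => σ ^ 4 * ρ₁) 1 := by fun_prop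
    simpa using hcont.tendsto.mono_left nhdsWithin_le_nhds
  have hdiv : Tendsto (fun σ : ℝ => ρ₂ / σ ^ 4) (𝓝[<] 1) (𝓝 ρ₂) := by
    have hcont : ContinuousAt (fun σ : ℝ => ρ₂ / σ ^ 4) 1 := by fun_prop (disch := norm_num)
    simpa using hcont.tendsto.mono_left nhdsWithin_le_nhds
  obtain ⟨σ, haσ, hbσ, hσ₀, hσ₁⟩ :=
    (((ENNReal.tendsto_ofReal hmul).eventually_const_lt ha).and
      (((ENNReal.tendsto_ofReal hdiv).eventually_lt_const hb).and (Ioo_mem_nhdsLT one_pos))).exists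
  exact ⟨σ, hσ₀, hσ₁, haσ, hbσ⟩

lemma exists_forall_norm_biorbit_le {S : X₀ → X₀} {ρ₁ ρ₂ : ℝ} (hρ : ρ₁ ≤ ρ₂)
    (ha : aT X₀ S < ENNReal.ofReal ρ₁) (hb : ENNReal.ofReal ρ₂ < bT T X₀) :
    ∃ σ, 0 < σ ∧ σ < 1 ∧ ∀ y, ∃ C, ∀ r ∈ Set.Icc ρ₁ ρ₂, ∀ k : ℤ,
      ‖biorbit T S y k‖ ≤ C * (σ ^ 4) ^ k.natAbs * r ^ (-k) := by
  have hρ₁ : 0 < ρ₁ := ENNReal.ofReal_pos.1 (bot_le.trans_lt ha)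
  have hρ₂ : 0 < ρ₂ := hρ₁.trans_le hρ
  obtain ⟨σ, hσ₀, hσ₁, haσ, hbσ⟩ :=
    exists_lt_ofReal_pow_four_mul_and_ofReal_div_pow_four_lt ha hb
  refine ⟨σ, hσ₀, hσ₁, fun y => ?_⟩
  obtain ⟨C₁, hC₁⟩ := exists_forall_norm_iterate_le_of_aT_lt haσ y
  obtain ⟨C₂, hC₂⟩ := exists_forall_norm_pow_apply_le_of_lt_bT (by positivity) hbσ y
  have hmax : 0 ≤ max C₁ C₂ := le_max_of_le_left (by simpa using (norm_nonneg _).trans (hC₁ 0))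
  refine ⟨max C₁ C₂, fun r hr => norm_biorbit_le (by positivity) hρ₁ hmax (fun n => ?_)
    (fun n => ?_) hr⟩
  · exact (hC₁ n).trans (by gcongr; exact le_max_left _ _)
  · rw [← inv_div]
    exact (hC₂ n).trans (by gcongr; exact le_max_right _ _)

end Growth

section FrequentHypercyclicity

variable {X : Type*} [NormedAddCommGroup X] [NormedSpace ℂ X] {T : X →L[ℂ] X} {x : X}

/- With `u = l / w ^ p` of modulus one, `(l • T ^ p) ^ n x = u ^ n • w ^ (p n) • T ^ (p n) x`, and
`u ^ n` is close to one for syndetically many multiples `n` of `k`. -/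
lemma IsSlotHypercyclic.mem_FHC_smul_pow {w : ℂ} {Q p : ℕ} (hx : IsSlotHypercyclic T Q w x)
    (hw : w ≠ 0) (hQ : 2 ≤ Q) (hp : 0 < p) {l : ℂ} (hl : ‖l‖ = ‖w‖ ^ p) :
    x ∈ FHC (l • T ^ p) := by
  rintro U hU ⟨y, hy⟩
  obtain ⟨ε, hε, hεU⟩ := Metric.isOpen_iff.1 hU y hy
  obtain ⟨k, hk, J, hJ, hclose⟩ := hx y (ε / 2) (by positivity)
  obtain ⟨m₀, hm₀⟩ := eventually_atTop.1 hclose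
  set u := l / w ^ p
  have hu : ‖u‖ = 1 := by
    rw [norm_div, norm_pow, hl, div_self (pow_ne_zero p (norm_ne_zero_iff.2 hw))]
  have hrecur : IsSyndetic {n | k ∣ n ∧ ‖u ^ n - 1‖ < ε / (2 * (‖y‖ + 1))} :=
    isSyndetic_setOf_dvd_and_norm_pow_sub_one_lt hu hk (by positivity)
  refine (hrecur.inter_Ici m₀).lowerDensity_pos_of_subset hJ hQ hp ?_
  rintro n ⟨⟨⟨hkn, hun⟩, hn⟩, hslot⟩
  have happrox := hm₀ (p * n) (hn.trans (Nat.le_mul_of_pos_left n hp)) hslot (hkn.mul_left p)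
  set v := w ^ (p * n) • (T ^ (p * n)) x
  have horbit : ((l • T ^ p) ^ n) x = u ^ n • v := by
    rw [smul_pow, ← pow_mul, smul_apply, smul_smul, div_pow, ← pow_mul,
      div_mul_cancel₀ _ (pow_ne_zero _ hw)]
  have hphase : ‖u ^ n - 1‖ * ‖y‖ < ε / 2 := by
    calc ‖u ^ n - 1‖ * ‖y‖ ≤ ‖u ^ n - 1‖ * (‖y‖ + 1) := by gcongr; linarith
      _ < ε / (2 * (‖y‖ + 1)) * (‖y‖ + 1) := by gcongr
      _ = ε / 2 := by field_simp
  apply hεU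
  rw [Metric.mem_ball, dist_eq_norm, horbit]
  calc ‖u ^ n • v - y‖ = ‖u ^ n • (v - y) + (u ^ n - 1) • y‖ := by congr 1; module
    _ ≤ ‖u ^ n • (v - y)‖ + ‖(u ^ n - 1) • y‖ := norm_add_le ..
    _ = ‖v - y‖ + ‖u ^ n - 1‖ * ‖y‖ := by rw [norm_smul, norm_smul, norm_pow, hu, one_pow, one_mul]
    _ < ε := by linarith

theorem exists_forall_mem_FHC_smul_pow [CompleteSpace X] [TopologicalSpace.SeparableSpace X]
    {X₀ : Set X} (hX₀ : Dense X₀) {S : X₀ → X₀} (hTS : ∀ x : X₀, T (S x) = x) {R : Set ℝ}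
    (hne : R.Nonempty) (hR : R.Countable) (hcpt : IsCompact (closure R))
    (hsub : closure R ⊆ {r | aT X₀ S < ENNReal.ofReal r ∧ ENNReal.ofReal r < bT T X₀}) :
    ∃ x : X, ∀ l : ℂ, ∀ p : ℕ, 0 < p → ∀ r ∈ R, ‖l‖ = r ^ p → x ∈ FHC (l • T ^ p) := by
  obtain ⟨ρ₁, hρ₁, hρ₁_le⟩ := hcpt.exists_isLeast hne.closure
  obtain ⟨ρ₂, hρ₂, hle_ρ₂⟩ := hcpt.exists_isGreatest hne.closure
  have hρ₁₀ : 0 < ρ₁ := ENNReal.ofReal_pos.1 (bot_le.trans_lt (hsub hρ₁).1)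
  have hIcc : ∀ r : R, (r : ℝ) ∈ Set.Icc ρ₁ ρ₂ :=
    fun r => ⟨hρ₁_le (subset_closure r.2), hle_ρ₂ (subset_closure r.2)⟩
  have hnorm : ∀ r : R, ‖((r : ℝ) : ℂ)‖ = r :=
    fun r => Complex.norm_of_nonneg (hρ₁₀.le.trans (hIcc r).1)
  obtain ⟨σ, hσ₀, hσ₁, hbound⟩ :=
    exists_forall_norm_biorbit_le (hρ₁_le hρ₂) (hsub hρ₁).1 (hsub hρ₂).2
  choose C hC using hbound
  have := UniformSpace.secondCountable_of_separable X
  have := hX₀.nonempty.to_subtype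
  have := hR.to_subtype
  have := hne.to_subtype
  set y := TopologicalSpace.denseSeq X₀
  have hfamily : IsGeometricOrbitFamily T (fun n => biorbit T S (y n))
      (fun r : R => ((r : ℝ) : ℂ)) (fun n => C (y n)) (σ ^ 4) :=
    { apply_eq := fun n => apply_biorbit hTS (y n)
      weight_ne_zero := fun r => by
        rw [← norm_ne_zero_iff, hnorm]
        exact (hρ₁₀.trans_le (hIcc r).1).ne'
      norm_le := fun n r k => by
        rw [hnorm]
        exact hC (y n) r (hIcc r) k }
  have hdense : DenseRange fun n => biorbit T S (y n) 0 :=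
    hX₀.denseRange_val.comp (TopologicalSpace.denseRange_denseSeq X₀) continuous_subtype_val
  obtain ⟨x, Q, hQ, hx⟩ := hfamily.exists_forall_isSlotHypercyclic hσ₀ hσ₁ hdense
    (D := ρ₂ / ρ₁) fun r r' => by
      rw [hnorm, hnorm]
      exact div_le_div₀ (hρ₁₀.le.trans (hρ₁_le hρ₂)) (hIcc r).2 hρ₁₀ (hIcc r').1
  exact ⟨x, fun l p hp r hr hl => (hx ⟨r, hr⟩).mem_FHC_smul_pow (hfamily.weight_ne_zero ⟨r, hr⟩)
    hQ hp (by rwa [hnorm])⟩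

end FrequentHypercyclicity

/-- Corollary 2.16. -/
theorem stmt7 {X : Type*} [NormedAddCommGroup X] [NormedSpace ℂ X]
    [CompleteSpace X] [TopologicalSpace.SeparableSpace X]
    (T : X →L[ℂ] X) (X₀ : Set X) (hX₀ : Dense X₀) (S : X₀ → X₀)
    (hTS : ∀ x : X₀, T ((S x : X₀) : X) = (x : X))
    (Λ : Set ℂ) (hne : Λ.Nonempty) :
    -- First part: moduli countable and relatively compact in (a_T, b_T)
    ((Set.Countable {r : ℝ | ∃ l ∈ Λ, ‖l‖ = r} ∧
      IsCompact (closure {r : ℝ | ∃ l ∈ Λ, ‖l‖ = r}) ∧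
      closure {r : ℝ | ∃ l ∈ Λ, ‖l‖ = r} ⊆
        {r : ℝ | aT X₀ S < ENNReal.ofReal r ∧ ENNReal.ofReal r < bT T X₀}) →
      ∃ x : X, ∀ l ∈ Λ, x ∈ FHC (l • T)) ∧
    -- Second part: the set {|λ|^{1/p}} countable and relatively compact in (a_T, b_T)
    ((Set.Countable {r : ℝ | ∃ l ∈ Λ, ∃ p : ℕ, 1 ≤ p ∧ ‖l‖ ^ ((1 : ℝ) / p) = r} ∧
      IsCompact (closure {r : ℝ | ∃ l ∈ Λ, ∃ p : ℕ, 1 ≤ p ∧ ‖l‖ ^ ((1 : ℝ) / p) = r}) ∧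
      closure {r : ℝ | ∃ l ∈ Λ, ∃ p : ℕ, 1 ≤ p ∧ ‖l‖ ^ ((1 : ℝ) / p) = r} ⊆
        {r : ℝ | aT X₀ S < ENNReal.ofReal r ∧ ENNReal.ofReal r < bT T X₀}) →
      ∃ x : X, ∀ l ∈ Λ, ∀ p : ℕ, 1 ≤ p → x ∈ FHC (l • (T ^ p))) := by
  refine ⟨fun ⟨hc, hcpt, hsub⟩ => ?_, fun ⟨hc, hcpt, hsub⟩ => ?_⟩
  · have hmoduli : {r : ℝ | ∃ l ∈ Λ, ‖l‖ = r}.Nonempty := hne.image norm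
    obtain ⟨x, hx⟩ := exists_forall_mem_FHC_smul_pow hX₀ hTS hmoduli hc hcpt hsub
    exact ⟨x, fun l hl => by simpa using hx l 1 one_pos ‖l‖ ⟨l, hl, rfl⟩ (pow_one _).symm⟩
  · have hroots : {r : ℝ | ∃ l ∈ Λ, ∃ p : ℕ, 1 ≤ p ∧ ‖l‖ ^ ((1 : ℝ) / p) = r}.Nonempty :=
      hne.elim fun l hl => ⟨_, l, hl, 1, le_rfl, rfl⟩
    obtain ⟨x, hx⟩ := exists_forall_mem_FHC_smul_pow hX₀ hTS hroots hc hcpt hsub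
    refine ⟨x, fun l hl p hp => hx l p hp _ ⟨l, hl, p, hp, rfl⟩ ?_⟩
    rw [one_div, Real.rpow_inv_natCast_pow (norm_nonneg l) (by omega)]
end

section
/- Let 1 ≤ p < ∞, let B_w be a bounded weighted backward shift on ℓ^p(ℕ), and let Λ ⊆ (0,+∞) be nonempty. Then: (1) ⋂_{λ∈Λ} FHC(λB_w) is nonempty whenever Λ is a countable relatively compact subset of (r_{p,w}^{−1}, +∞); (2) ⋂_{λ∈Λ} FHC(λB_w) is empty whenever Λ is unbounded, or Λ has at least two elements and r(B_w)^{−1} ≥ inf(Λ). In particular, if r_{p,w} = r(B_w) and Λ has at least two elements, then ⋂_{λ∈Λ} FHC(λB_w) ≠ ∅ if and only if Λ is countable and relatively compact in (r_{p,w}^{−1}, +∞). -/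
open Filter Topology
open scoped ENNReal NNReal

/-- `r_{p,w}⁻¹ = limsup_n |w₁⋯w_n|^{-1/n}`, computed in `ℝ≥0∞`. -/
noncomputable def rpwInv (w : ℕ → ℂ) : ℝ≥0∞ :=
  Filter.limsup
    (fun n : ℕ => ((∏ k ∈ Finset.Icc 1 n, (‖w k‖₊ : ℝ≥0∞))⁻¹) ^ (1 / (n : ℝ)))
    Filter.atTop

/-!
*Obstructions.* Let `x` be frequently hypercyclic for `l • B` for every `l ∈ Λ`. For distinct `l`
the numbers `lⁿ ‖Bⁿ x‖` differ by an exponentially large factor, so the sets of `n` for which they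
lie in `(1, 2)` are pairwise almost disjoint; all have positive lower density, hence `Λ` is
countable. Moreover a set of positive lower density meets `[N / K, N]` for all large `N`, with `K`
depending only on the set. Comparing times `n ≤ N ≤ K n` with `lⁿ ‖Bⁿ x‖ < 1 < mᴺ ‖Bᴺ x‖` gives
`l ≤ m * max 1 (ρ m) ^ K` for every `ρ > r(B)`, where `K` may be chosen to depend only on `m` or
only on `l`. The first choice bounds `Λ`. In the second one may let `m` tend to `inf Λ`; if
`inf Λ ≤ r(B)⁻¹` this forces `l ≤ inf Λ` for every `l ∈ Λ`.

*Construction.* Choose for each `l ∈ Λ` countably many periodic vectors of `l • B` that are dense.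
Cut `ℕ` into the blocks `[Qˢ, Qˢ⁺¹)`, assign a pair (parameter, periodic vector) to each block so
that every pair recurs with bounded gaps in `s`, and let `x` copy on each block the coefficients of
its periodic vector `v`. If `n` is a multiple of the period at the start of a block for `(l, v)`,
then `(l • B)ⁿ x` and `v` have the same coefficients up to a large multiple of `n`, and the
remaining tail is small because `Λ` stays away from `r_{p,w}⁻¹`.
-/

section LowerDensity

lemma lowerDensity_eq_liminf_count (E : Set ℕ) [DecidablePred (· ∈ E)] :
    lowerDensity E = liminf (fun n : ℕ => (Nat.count (· ∈ E) n : ℝ) / n) atTop := by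
  rw [← liminf_nat_add _ 1]
  simp [lowerDensity, Nat.count_eq_card_filter_range, Set.indicator_apply]

lemma eventually_mul_le_count_of_lt_lowerDensity {E : Set ℕ} [DecidablePred (· ∈ E)] {c : ℝ}
    (h : c < lowerDensity E) :
    ∀ᶠ n : ℕ in atTop, c * n ≤ Nat.count (· ∈ E) n := by
  rw [lowerDensity_eq_liminf_count] at h
  have hbdd : IsBoundedUnder (· ≥ ·) atTop fun n : ℕ => (Nat.count (· ∈ E) n : ℝ) / n :=
    isBoundedUnder_of ⟨0, fun n => by positivity⟩
  filter_upwards [eventually_lt_of_lt_liminf h hbdd, eventually_gt_atTop 0] with n hn hn0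
  exact ((lt_div_iff₀ (Nat.cast_pos.2 hn0)).1 hn).le

lemma le_lowerDensity_of_eventually_mul_le_count_add {E : Set ℕ} [DecidablePred (· ∈ E)]
    {c A : ℝ}
    (h : ∀ᶠ n : ℕ in atTop, c * n ≤ Nat.count (· ∈ E) n + A) : c ≤ lowerDensity E := by
  refine le_of_forall_lt_imp_le_of_dense fun d hd => ?_
  rw [lowerDensity_eq_liminf_count]
  have hcobdd : IsCoboundedUnder (· ≥ ·) atTop fun n : ℕ => (Nat.count (· ∈ E) n : ℝ) / n :=
    (isBoundedUnder_of ⟨1, fun n => div_le_one_of_le₀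
      (Nat.cast_le.2 (Nat.count_le _)) n.cast_nonneg⟩).isCoboundedUnder_ge
  have hA : ∀ᶠ n : ℕ in atTop, A ≤ (c - d) * n :=
    (tendsto_natCast_atTop_atTop.const_mul_atTop (sub_pos.2 hd)).eventually_ge_atTop A
  refine le_liminf_of_le hcobdd ?_
  filter_upwards [h, hA, eventually_gt_atTop 0] with n hn hAn hn0
  rw [le_div_iff₀ (Nat.cast_pos.2 hn0)]
  linarith

lemma lowerDensity_le_one (E : Set ℕ) : lowerDensity E ≤ 1 := by
  classical
  refine le_of_forall_lt_imp_le_of_dense fun c hc => ?_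
  obtain ⟨n, hn, hn0⟩ := ((eventually_mul_le_count_of_lt_lowerDensity hc).and
    (eventually_gt_atTop 0)).exists
  have hcount : (Nat.count (· ∈ E) n : ℝ) ≤ n := Nat.cast_le.2 (Nat.count_le _)
  exact le_of_mul_le_mul_right (by linarith) (Nat.cast_pos.2 hn0 : (0 : ℝ) < n)

lemma lowerDensity_add_le_union {E F : Set ℕ} (hEF : (E ∩ F).Finite) :
    lowerDensity E + lowerDensity F ≤ lowerDensity (E ∪ F) := by
  classical
  refine add_le_of_forall_lt fun a ha b hb => ?_
  refine le_lowerDensity_of_eventually_mul_le_count_add (A := hEF.toFinset.card) ?_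
  filter_upwards [eventually_mul_le_count_of_lt_lowerDensity ha,
    eventually_mul_le_count_of_lt_lowerDensity hb] with n hEn hFn
  have hcount : Nat.count (· ∈ E) n + Nat.count (· ∈ F) n ≤
      Nat.count (· ∈ E ∪ F) n + hEF.toFinset.card := by
    simp only [Nat.count_eq_card_filter_range]
    rw [← Finset.card_union_add_card_inter, ← Finset.filter_or, ← Finset.filter_and]
    gcongr
    · exact fun h => h
    · intro k hk
      simpa using (Finset.mem_filter.1 hk).2
  have hcount' : (Nat.count (· ∈ E) n + Nat.count (· ∈ F) n : ℝ) ≤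
      Nat.count (· ∈ E ∪ F) n + hEF.toFinset.card := mod_cast hcount
  linarith

lemma lowerDensity_mono_of_eventually {E F : Set ℕ} (h : ∀ᶠ n in atTop, n ∈ E → n ∈ F) :
    lowerDensity E ≤ lowerDensity F := by
  classical
  obtain ⟨N, hN⟩ := eventually_atTop.1 h
  refine le_of_forall_lt_imp_le_of_dense fun c hc => ?_
  refine le_lowerDensity_of_eventually_mul_le_count_add (A := N) ?_
  filter_upwards [eventually_mul_le_count_of_lt_lowerDensity hc, eventually_ge_atTop N]
    with n hn hNn
  obtain ⟨k, rfl⟩ := Nat.exists_eq_add_of_le hNn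
  have hcount : Nat.count (· ∈ E) (N + k) ≤ Nat.count (· ∈ F) (N + k) + N := by
    rw [Nat.count_add, Nat.count_add, add_right_comm]
    have hhead : Nat.count (· ∈ E) N ≤ N := Nat.count_le _
    have htail : Nat.count (N + · ∈ E) k ≤ Nat.count (N + · ∈ F) k :=
      Nat.count_mono_left fun i _ => hN _ (N.le_add_right i)
    omega
  exact hn.trans (mod_cast hcount)

lemma lowerDensity_empty : lowerDensity ∅ = 0 := by
  simp [lowerDensity]

lemma frequently_mem_of_lowerDensity_pos {E : Set ℕ} (hE : 0 < lowerDensity E) :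
    ∃ᶠ n in atTop, n ∈ E := by
  intro hnot
  have hle := lowerDensity_mono_of_eventually (F := ∅) hnot
  exact (hE.trans_le hle).ne' lowerDensity_empty

lemma sum_lowerDensity_le_biUnion {ι : Type*} {E : ι → Set ℕ}
    (hE : Pairwise fun i j => (E i ∩ E j).Finite) (s : Finset ι) :
    ∑ i ∈ s, lowerDensity (E i) ≤ lowerDensity (⋃ i ∈ s, E i) := by
  classical
  induction s using Finset.induction_on with
  | empty => simp [lowerDensity_empty]
  | insert i s his ih =>
    rw [Finset.sum_insert his, Finset.set_biUnion_insert]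
    refine (add_le_add_right ih _).trans (lowerDensity_add_le_union ?_)
    rw [Set.inter_iUnion₂]
    exact s.finite_toSet.biUnion fun j hj => hE fun hij => his (hij ▸ hj)

lemma countable_of_lowerDensity_pos {ι : Type*} {E : ι → Set ℕ}
    (hpos : ∀ i, 0 < lowerDensity (E i)) (hE : Pairwise fun i j => (E i ∩ E j).Finite) :
    Countable ι := by
  have hsum : Summable fun i => lowerDensity (E i) :=
    summable_of_sum_le (fun i => (hpos i).le) fun s =>
      (sum_lowerDensity_le_biUnion hE s).trans (lowerDensity_le_one _)
  rw [← Set.countable_univ_iff, ← Function.support_eq_univ fun i => (hpos i).ne']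
  exact hsum.countable_support

lemma exists_eventually_exists_mem_le_mul {E : Set ℕ} (hE : 0 < lowerDensity E) :
    ∃ K : ℕ, ∀ᶠ N in atTop, ∃ n ∈ E, n ≤ N ∧ N ≤ K * n := by
  classical
  obtain ⟨c, hc0, hc⟩ := exists_between hE
  obtain ⟨K, hK⟩ := exists_nat_gt (2 / c)
  have hK0 : (0 : ℝ) < K := lt_trans (by positivity) hK
  refine ⟨K, ?_⟩
  filter_upwards [eventually_mul_le_count_of_lt_lowerDensity hc,
    (tendsto_natCast_atTop_atTop (R := ℝ)).eventually_gt_atTop (2 / c)] with N hcount hN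
  by_contra! hgap
  have hcount_le : Nat.count (· ∈ E) N ≤ N / K + 1 := by
    rw [Nat.count_eq_card_filter_range, ← Finset.card_range (N / K + 1)]
    refine Finset.card_le_card fun n hn => ?_
    obtain ⟨hnN, hnE⟩ := Finset.mem_filter.1 hn
    have hlt := hgap n hnE (Finset.mem_range.1 hnN).le
    rw [Finset.mem_range, Nat.lt_succ_iff, Nat.le_div_iff_mul_le (mod_cast hK0), mul_comm]
    exact hlt.le
  have hdiv : (Nat.count (· ∈ E) N : ℝ) ≤ N / K + 1 :=
    (Nat.cast_le.2 hcount_le).trans (by push_cast; gcongr; exact Nat.cast_div_le)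
  rw [div_lt_iff₀ hc0] at hK hN
  have hNK : (N : ℝ) / K < c * N / 2 := by
    rw [div_lt_iff₀ hK0]
    nlinarith
  linarith

lemma exists_frequently_mem_between_mul_of_lowerDensity_pos_right {F : Set ℕ}
    (hF : 0 < lowerDensity F) :
    ∃ K : ℕ, ∀ E : Set ℕ, (∃ᶠ n in atTop, n ∈ E) →
      ∃ᶠ n in atTop, n ∈ E ∧ ∃ N ∈ F, n ≤ N ∧ N ≤ K * n := by
  obtain ⟨K, hK⟩ := exists_eventually_exists_mem_le_mul hF
  have hK0 : 0 < K := by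
    obtain ⟨N, ⟨n, -, -, hn⟩, hN⟩ := (hK.and (eventually_gt_atTop 0)).exists
    exact Nat.pos_of_mul_pos_right (hN.trans_le hn)
  refine ⟨K, fun E hE => ?_⟩
  have hKn := (tendsto_id.const_mul_atTop' hK0).eventually hK
  refine (hE.and_eventually hKn).mono fun n ⟨hnE, N, hNF, hN, hnN⟩ => ?_
  exact ⟨hnE, N, hNF, le_of_mul_le_mul_left hnN hK0, hN⟩

lemma exists_frequently_mem_between_mul_of_lowerDensity_pos_left {E : Set ℕ}
    (hE : 0 < lowerDensity E) :
    ∃ K : ℕ, ∀ F : Set ℕ, (∃ᶠ N in atTop, N ∈ F) →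
      ∃ᶠ n in atTop, n ∈ E ∧ ∃ N ∈ F, n ≤ N ∧ N ≤ K * n := by
  obtain ⟨K, hK⟩ := exists_eventually_exists_mem_le_mul hE
  refine ⟨K, fun F hF => frequently_atTop.2 fun a => ?_⟩
  obtain ⟨N, ⟨hNF, n, hnE, hnN, hN⟩, haN⟩ :=
    ((hF.and_eventually hK).and_eventually (eventually_gt_atTop (K * a))).exists
  exact ⟨n, (lt_of_mul_lt_mul_left' (haN.trans_le hN)).le, hnE, N, hNF, hnN, hN⟩

end LowerDensity

section RootTest

lemma exists_forall_le_mul_pow_of_limsup_lt {u : ℕ → ℝ≥0} {ρ : ℝ≥0}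
    (h : limsup (fun n : ℕ => (u n : ℝ≥0∞) ^ (1 / (n : ℝ))) atTop < ρ) :
    ∃ C : ℝ, ∀ n, (u n : ℝ) ≤ C * ρ ^ n := by
  have hρ : (0 : ℝ) < ρ := ENNReal.coe_pos.1 (pos_of_gt h)
  have hu : ∀ᶠ n in atTop, u n ≤ ρ ^ n := by
    filter_upwards [eventually_lt_of_limsup_lt h, eventually_gt_atTop 0] with n hn hn0
    rw [one_div, ENNReal.rpow_inv_lt_iff (Nat.cast_pos.2 hn0), ENNReal.rpow_natCast] at hn
    exact mod_cast hn.le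
  have hO : (fun n => (u n : ℝ)) =O[atTop] fun n => (ρ : ℝ) ^ n := by
    refine Asymptotics.IsBigO.of_bound 1 (hu.mono fun n hn => ?_)
    simpa using (mod_cast hn : (u n : ℝ) ≤ ρ ^ n)
  obtain ⟨C, -, hbound⟩ := Asymptotics.bound_of_isBigO_nat_atTop hO
  refine ⟨C, fun n => ?_⟩
  simpa using hbound (pow_pos hρ n).ne'

lemma le_of_frequently_pow_le_mul_pow {a b C : ℝ} (ha : 0 < a)
    (h : ∃ᶠ n : ℕ in atTop, b ^ n ≤ C * a ^ n) : b ≤ a := by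
  by_contra! hab
  have hC := (tendsto_pow_atTop_atTop_of_one_lt ((one_lt_div ha).2 hab)).eventually_gt_atTop C
  obtain ⟨n, hn, hCn⟩ := (h.and_eventually hC).exists
  rw [div_pow, lt_div_iff₀ (pow_pos ha n)] at hCn
  exact hn.not_gt hCn

end RootTest

section NecessaryConditions

variable {X : Type*} [NormedAddCommGroup X] [NormedSpace ℂ X] {B : X →L[ℂ] X} {x : X}

lemma norm_smul_pow_apply (B : X →L[ℂ] X) {l : ℝ} (hl : 0 ≤ l) (n : ℕ) (x : X) :
    ‖(((l : ℂ) • B) ^ n) x‖ = l ^ n * ‖(B ^ n) x‖ := by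
  rw [smul_pow, _root_.smul_apply, norm_smul, norm_pow, Complex.norm_real,
    Real.norm_of_nonneg hl]

lemma lowerDensity_norm_mem_pos [Nontrivial X] {l : ℝ} (hl : 0 ≤ l)
    (hx : x ∈ FHC ((l : ℂ) • B)) {s : Set ℝ} (hs : IsOpen s) {c : ℝ} (hc : 0 ≤ c)
    (hcs : c ∈ s) :
    0 < lowerDensity {n | l ^ n * ‖(B ^ n) x‖ ∈ s} := by
  obtain ⟨y, rfl⟩ := exists_norm_eq X hc
  simpa only [Set.mem_preimage, norm_smul_pow_apply B hl] using
    hx (norm ⁻¹' s) (hs.preimage continuous_norm) ⟨y, hcs⟩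

lemma lowerDensity_norm_lt_one_pos [Nontrivial X] {l : ℝ} (hl : 0 ≤ l)
    (hx : x ∈ FHC ((l : ℂ) • B)) :
    0 < lowerDensity {n | l ^ n * ‖(B ^ n) x‖ < 1} :=
  lowerDensity_norm_mem_pos hl hx (s := Set.Iio 1) isOpen_Iio le_rfl (Set.mem_Iio.2 zero_lt_one)

lemma lowerDensity_one_lt_norm_pos [Nontrivial X] {l : ℝ} (hl : 0 ≤ l)
    (hx : x ∈ FHC ((l : ℂ) • B)) :
    0 < lowerDensity {n | 1 < l ^ n * ‖(B ^ n) x‖} :=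
  lowerDensity_norm_mem_pos hl hx (s := Set.Ioi 1) isOpen_Ioi zero_le_two
    (Set.mem_Ioi.2 one_lt_two)

lemma le_mul_max_one_mul_pow_of_frequently {C l m : ℝ} {ρ : ℝ≥0} {K : ℕ}
    (hB : ∀ k, ‖B ^ k‖ ≤ C * ρ ^ k) (hl : 0 < l) (hm : 0 < m)
    (h : ∃ᶠ n in atTop, l ^ n * ‖(B ^ n) x‖ < 1 ∧
      ∃ N, 1 < m ^ N * ‖(B ^ N) x‖ ∧ n ≤ N ∧ N ≤ K * n) :
    l ≤ m * max 1 (ρ * m) ^ K := by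
  refine le_of_frequently_pow_le_mul_pow (C := C) (by positivity) (h.mono ?_)
  rintro n ⟨hn, N, hN, hnN, hNK⟩
  obtain ⟨k, rfl⟩ := Nat.exists_eq_add_of_le hnN
  have hC : 0 ≤ C := by simpa using (norm_nonneg (B ^ 0)).trans (hB 0)
  have happly : ‖(B ^ (n + k)) x‖ ≤ C * ρ ^ k * ‖(B ^ n) x‖ := by
    rw [add_comm, pow_add]
    exact (B ^ k).le_of_opNorm_le (hB k) _
  have hmax : (ρ * m) ^ k ≤ (max 1 (ρ * m) ^ K) ^ n :=
    calc
      (ρ * m) ^ k ≤ max 1 (ρ * m) ^ k := by gcongr; exact le_max_right _ _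
      _ ≤ max 1 (ρ * m) ^ (K * n) := by gcongr; exacts [le_max_left _ _, by omega]
      _ = (max 1 (ρ * m) ^ K) ^ n := pow_mul _ _ _
  calc
    l ^ n ≤ l ^ n * (m ^ (n + k) * ‖(B ^ (n + k)) x‖) :=
      le_mul_of_one_le_right (by positivity) hN.le
    _ ≤ l ^ n * (m ^ (n + k) * (C * ρ ^ k * ‖(B ^ n) x‖)) := by gcongr
    _ = m ^ n * (C * (ρ * m) ^ k) * (l ^ n * ‖(B ^ n) x‖) := by ring
    _ ≤ m ^ n * (C * (max 1 (ρ * m) ^ K) ^ n) * 1 := by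
      gcongr
    _ = C * (m * max 1 (ρ * m) ^ K) ^ n := by ring

theorem bddAbove_of_mem_iInter_FHC [Nontrivial X] {Λ : Set ℝ} (hΛ : Λ ⊆ Set.Ioi 0)
    (hx : x ∈ ⋂ l ∈ Λ, FHC ((l : ℂ) • B)) : BddAbove Λ := by
  obtain rfl | ⟨m, hm⟩ := Λ.eq_empty_or_nonempty
  · exact bddAbove_empty
  rw [Set.mem_iInter₂] at hx
  obtain ⟨K, hK⟩ := exists_frequently_mem_between_mul_of_lowerDensity_pos_right
    (lowerDensity_one_lt_norm_pos (hΛ hm).le (hx m hm))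
  refine ⟨m * max 1 (‖B‖₊ * m) ^ K, fun l hl => ?_⟩
  have hsmall := frequently_mem_of_lowerDensity_pos
    (lowerDensity_norm_lt_one_pos (hΛ hl).le (hx l hl))
  have hB : ∀ k, ‖B ^ k‖ ≤ 1 * (‖B‖₊ : ℝ) ^ k := fun k => by simpa using norm_pow_le B k
  exact le_mul_max_one_mul_pow_of_frequently hB (hΛ hl) (hΛ hm) (hK _ hsmall)

lemma finite_inter_Ioo_one_two {a : ℕ → ℝ} {l m : ℝ} (hl : 0 < l) (hlm : l < m) :
    ({n | l ^ n * a n ∈ Set.Ioo 1 2} ∩ {n | m ^ n * a n ∈ Set.Ioo 1 2}).Finite := by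
  have hratio := (tendsto_pow_atTop_atTop_of_one_lt
    ((one_lt_div hl).2 hlm)).eventually_ge_atTop 2
  rw [← Nat.cofinite_eq_atTop, Filter.eventually_cofinite] at hratio
  refine hratio.subset fun n ⟨hn1, hn2⟩ hn => ?_
  rw [div_pow, le_div_iff₀ (pow_pos hl n)] at hn
  have ha : 0 < a n := pos_of_mul_pos_right (zero_lt_one.trans hn1.1) (pow_nonneg hl.le n)
  nlinarith [hn1.1, hn2.2]

theorem countable_of_mem_iInter_FHC [Nontrivial X] {Λ : Set ℝ} (hΛ : Λ ⊆ Set.Ioi 0)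
    (hx : x ∈ ⋂ l ∈ Λ, FHC ((l : ℂ) • B)) : Λ.Countable := by
  rw [Set.mem_iInter₂] at hx
  refine countable_of_lowerDensity_pos
    (E := fun l : Λ => {n | (l : ℝ) ^ n * ‖(B ^ n) x‖ ∈ Set.Ioo 1 2}) (fun l => ?_) ?_
  · exact lowerDensity_norm_mem_pos (hΛ l.2).le (hx l l.2) isOpen_Ioo (c := 3 / 2)
      (by norm_num) (by norm_num)
  · intro l m hlm
    obtain h | h := lt_or_gt_of_ne (Subtype.coe_injective.ne hlm)
    · exact finite_inter_Ioo_one_two (hΛ l.2) h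
    · rw [Set.inter_comm]
      exact finite_inter_Ioo_one_two (hΛ m.2) h

lemma exists_forall_le_mul_max_one_mul_pow [Nontrivial X] [CompleteSpace X] {l : ℝ}
    (hl : 0 < l) (hx : x ∈ FHC ((l : ℂ) • B)) :
    ∃ K : ℕ, ∀ m : ℝ, 0 < m → x ∈ FHC ((m : ℂ) • B) →
      l ≤ m * max 1 ((spectralRadius ℂ B).toReal * m) ^ K := by
  obtain ⟨K, hK⟩ := exists_frequently_mem_between_mul_of_lowerDensity_pos_left
    (lowerDensity_norm_lt_one_pos hl.le hx)
  refine ⟨K, fun m hm hxm => ?_⟩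
  have hlarge := frequently_mem_of_lowerDensity_pos (lowerDensity_one_lt_norm_pos hm.le hxm)
  have hr : ((spectralRadius ℂ B).toNNReal : ℝ≥0∞) = spectralRadius ℂ B :=
    ENNReal.coe_toNNReal
      ((spectrum.spectralRadius_le_nnnorm B).trans_lt ENNReal.coe_lt_top).ne
  have hlim := (spectrum.pow_nnnorm_pow_one_div_tendsto_nhds_spectralRadius B).limsup_eq
  have hρ : Set.Ioi (spectralRadius ℂ B).toNNReal ⊆ {ρ : ℝ≥0 | l ≤ m * max 1 (ρ * m) ^ K} := by
    intro ρ hρ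
    obtain ⟨C, hC⟩ := exists_forall_le_mul_pow_of_limsup_lt (u := fun n => ‖B ^ n‖₊)
      (ρ := ρ) (by rw [hlim, ← hr]; exact ENNReal.coe_lt_coe.2 hρ)
    exact le_mul_max_one_mul_pow_of_frequently hC hl hm (hK _ hlarge)
  have hclosed : IsClosed {ρ : ℝ≥0 | l ≤ m * max 1 (ρ * m) ^ K} :=
    isClosed_le (by fun_prop) (by fun_prop)
  exact closure_minimal hρ hclosed (closure_Ioi (spectralRadius ℂ B).toNNReal ▸ Set.self_mem_Ici)

theorem inv_spectralRadius_lt_ofReal_sInf_of_mem_iInter_FHC [Nontrivial X] [CompleteSpace X]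
    {Λ : Set ℝ} (hΛ : Λ ⊆ Set.Ioi 0) (hΛ₂ : Λ.Nontrivial)
    (hx : x ∈ ⋂ l ∈ Λ, FHC ((l : ℂ) • B)) :
    (spectralRadius ℂ B)⁻¹ < ENNReal.ofReal (sInf Λ) := by
  rw [Set.mem_iInter₂] at hx
  have hbdd : BddBelow Λ := ⟨0, fun l hl => (hΛ hl).le⟩
  have hinf : sInf Λ ∈ closure Λ := csInf_mem_closure hΛ₂.nonempty hbdd
  by_contra! hle
  have hle_one : (spectralRadius ℂ B).toReal * sInf Λ ≤ 1 := by
    have hmul := ENNReal.toReal_mono ENNReal.one_ne_top (ENNReal.le_inv_iff_mul_le.1 hle)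
    rwa [ENNReal.toReal_mul, ENNReal.toReal_one, mul_comm,
      ENNReal.toReal_ofReal (Real.sInf_nonneg fun l hl => (hΛ hl).le)] at hmul
  have hsub : Λ ⊆ {sInf Λ} := fun l hl => by
    obtain ⟨K, hK⟩ := exists_forall_le_mul_max_one_mul_pow (hΛ hl) (hx l hl)
    have hclosed : IsClosed {m | l ≤ m * max 1 ((spectralRadius ℂ B).toReal * m) ^ K} :=
      isClosed_le (by fun_prop) (by fun_prop)
    have hlinf : l ≤ sInf Λ * max 1 ((spectralRadius ℂ B).toReal * sInf Λ) ^ K :=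
      closure_minimal (fun m hm => hK m (hΛ hm) (hx m hm)) hclosed hinf
    rw [max_eq_left hle_one, one_pow, mul_one] at hlinf
    exact hlinf.antisymm (csInf_le hbdd hl)
  exact hΛ₂.not_subset_singleton hsub

end NecessaryConditions

section Blocks

lemma le_mul_card_filter_dvd_Ico_add_one {L : ℕ} (hL : 0 < L) (a b : ℕ) :
    b ≤ L * (((Finset.Ico a (a + b)).filter (L ∣ ·)).card + 1) := by
  have hcard := Nat.Ico_filter_modEq_card (v := 0) a (a + b) hL
  simp only [Nat.modEq_zero_iff_dvd, Nat.cast_zero, sub_zero, Nat.cast_add, add_div] at hcard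
  have hceil : ((⌈(a : ℚ) / L + b / L⌉ - ⌈(a : ℚ) / L⌉ : ℤ) : ℚ) ≤
      ((Finset.Ico a (a + b)).filter (L ∣ ·)).card := by
    exact_mod_cast (le_max_left _ 0).trans hcard.ge
  push_cast at hceil
  have hdiv : (b : ℚ) / L ≤ ((Finset.Ico a (a + b)).filter (L ∣ ·)).card + 1 := by
    linarith [Int.le_ceil ((a : ℚ) / L + b / L), Int.ceil_lt_add_one ((a : ℚ) / L)]
  rw [div_le_iff₀' (Nat.cast_pos.2 hL)] at hdiv
  exact_mod_cast hdiv

lemma lowerDensity_pos_of_forall_mem_of_dvd {E S : Set ℕ} {P Q L : ℕ}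
    (hS : ∀ s, ∃ t ∈ S, s ≤ t ∧ t ≤ s + P) (hQ : 2 ≤ Q) (hL : 0 < L)
    (hE : ∀ s ∈ S, ∀ n, Q ^ s ≤ n → n < Q ^ s + Q ^ s → L ∣ n → n ∈ E) :
    0 < lowerDensity E := by
  classical
  refine lt_of_lt_of_le (b := ((Q ^ (P + 2) * L : ℕ) : ℝ)⁻¹) (by positivity)
    (le_lowerDensity_of_eventually_mul_le_count_add (A := 1) ?_)
  filter_upwards [eventually_ge_atTop (Q ^ (P + 1))] with n hn
  have hn0 : n ≠ 0 := (lt_of_lt_of_le (by positivity) hn).ne'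
  have hlog : P + 1 ≤ Nat.log Q n := Nat.le_log_of_pow_le hQ hn
  obtain ⟨s, hsS, hs⟩ := hS (Nat.log Q n - (P + 1))
  have hblock : Q ^ s + Q ^ s ≤ n :=
    calc
      Q ^ s + Q ^ s = 2 * Q ^ s := (two_mul _).symm
      _ ≤ Q * Q ^ s := by gcongr
      _ = Q ^ (s + 1) := (pow_succ' Q s).symm
      _ ≤ Q ^ Nat.log Q n := Nat.pow_le_pow_right (by omega) (by omega)
      _ ≤ n := Nat.pow_log_le_self Q hn0
  have hcount : ((Finset.Ico (Q ^ s) (Q ^ s + Q ^ s)).filter (L ∣ ·)).card ≤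
      Nat.count (· ∈ E) n := by
    rw [Nat.count_eq_card_filter_range]
    refine Finset.card_le_card fun k hk => ?_
    obtain ⟨hks, hkL⟩ := Finset.mem_filter.1 hk
    rw [Finset.mem_Ico] at hks
    exact Finset.mem_filter.2
      ⟨Finset.mem_range.2 (hks.2.trans_le hblock), hE s hsS k hks.1 hks.2 hkL⟩
  have hn_le : n ≤ Q ^ (P + 2) * L * (Nat.count (· ∈ E) n + 1) :=
    calc
      n ≤ Q ^ (Nat.log Q n + 1) := (Nat.lt_pow_succ_log_self hQ n).le
      _ ≤ Q ^ (P + 2 + s) := Nat.pow_le_pow_right (by omega) (by omega)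
      _ = Q ^ (P + 2) * Q ^ s := pow_add Q _ s
      _ ≤ Q ^ (P + 2) * (L * (Nat.count (· ∈ E) n + 1)) := by
        gcongr
        exact (le_mul_card_filter_dvd_Ico_add_one hL _ _).trans (by gcongr)
      _ = Q ^ (P + 2) * L * (Nat.count (· ∈ E) n + 1) := (mul_assoc _ _ _).symm
  rw [inv_mul_le_iff₀ (by positivity)]
  exact_mod_cast hn_le

lemma exists_forall_exists_padicValNat_two_eq (i : ℕ) :
    ∃ P : ℕ, ∀ s, ∃ t, padicValNat 2 t = i ∧ s ≤ t ∧ t ≤ s + P := by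
  refine ⟨2 ^ (i + 1) + 2 ^ i, fun s => ⟨2 ^ i * (2 * (s / 2 ^ (i + 1) + 1) + 1), ?_, ?_⟩⟩
  · rw [padicValNat.mul (by positivity) (by omega), padicValNat.prime_pow,
      padicValNat.eq_zero_of_not_dvd (by omega), add_zero]
  · have hlow := Nat.lt_mul_div_succ s (Nat.pow_pos (n := i + 1) two_pos)
    have hup := Nat.mul_div_le s (2 ^ (i + 1))
    have heq : 2 ^ i * (2 * (s / 2 ^ (i + 1) + 1) + 1) =
        2 ^ (i + 1) * (s / 2 ^ (i + 1) + 1) + 2 ^ i := by ring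
    rw [heq]
    exact ⟨hlow.le.trans (Nat.le_add_right _ _), by linarith⟩

theorem exists_forall_lowerDensity_eq_on_Ico_mul_pos (ι : Type*) [Countable ι] [Nonempty ι]
    (M : ℕ) :
    ∃ φ : ℕ → ι, ∀ j, ∀ L > 0,
      0 < lowerDensity {n | L ∣ n ∧ ∀ i ∈ Set.Ico n (M * n), φ i = j} := by
  obtain ⟨e, he⟩ := exists_surjective_nat ι
  -- The block `[Qˢ, Qˢ⁺¹)`, `Q = 2 * M + 2`, is coloured by the 2-adic valuation of `s`: each value
  -- recurs with bounded gaps, and `[n, M * n)` lies in one block for `n` in the start of a block.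
  refine ⟨fun i => e (padicValNat 2 (Nat.log (2 * M + 2) i)), fun j L hL => ?_⟩
  obtain ⟨k, rfl⟩ := he j
  obtain ⟨P, hP⟩ := exists_forall_exists_padicValNat_two_eq k
  refine lowerDensity_pos_of_forall_mem_of_dvd (S := {t | padicValNat 2 t = k}) hP
    (Q := 2 * M + 2) (by omega) hL ?_
  rintro s rfl n hsn hns hLn
  refine ⟨hLn, fun i hi => ?_⟩
  have hlog : Nat.log (2 * M + 2) i = s := by
    refine Nat.log_eq_of_pow_le_of_lt_pow (hsn.trans hi.1) (hi.2.trans_le ?_)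
    rw [pow_succ]
    nlinarith
  simp only [hlog]

end Blocks

section JordanChain

variable {X : Type*} [NormedAddCommGroup X] [NormedSpace ℂ X] {B : X →L[ℂ] X} {g : ℕ → X}

/-- `g` is an infinite Jordan chain of `B` for the eigenvalue `0`: a backward orbit of the zero
vector. It plays the role of the vectors `(w₁ ⋯ wₙ)⁻¹ eₙ` of a weighted backward shift. -/
structure IsJordanChain (B : X →L[ℂ] X) (g : ℕ → X) : Prop where
  map_zero : B (g 0) = 0
  map_succ : ∀ n, B (g (n + 1)) = g n

lemma IsJordanChain.pow_apply_add (hg : IsJordanChain B g) (n k : ℕ) :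
    (B ^ n) (g (k + n)) = g k := by
  induction n with
  | zero => simp
  | succ n ih => rw [pow_succ, ← add_assoc, mul_apply_eq_comp, hg.map_succ, ih]

lemma IsJordanChain.pow_apply_of_lt (hg : IsJordanChain B g) {n k : ℕ} (h : k < n) :
    (B ^ n) (g k) = 0 := by
  obtain ⟨d, rfl⟩ := Nat.exists_eq_add_of_le' (Nat.succ_le_of_lt h)
  have hk : (B ^ k) (g k) = g 0 := by simpa only [zero_add] using hg.pow_apply_add k 0
  rw [pow_add, pow_succ', mul_apply_eq_comp, mul_apply_eq_comp, hk,
    hg.map_zero, (B ^ d).map_zero]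

lemma IsJordanChain.hasSum_pow_apply_tsum (hg : IsJordanChain B g) {y : ℕ → ℂ}
    (hy : Summable fun i => y i • g i) (n : ℕ) :
    HasSum (fun k => y (k + n) • g k) ((B ^ n) (∑' i, y i • g i)) := by
  have hhead : ∑ i ∈ Finset.range n, (B ^ n) (y i • g i) = 0 :=
    Finset.sum_eq_zero fun i hi => by
      rw [map_smul, hg.pow_apply_of_lt (Finset.mem_range.1 hi), smul_zero]
  have hsum := (hasSum_nat_add_iff' n).2 ((B ^ n).hasSum hy.hasSum)
  rw [hhead, sub_zero] at hsum
  simpa only [map_smul, hg.pow_apply_add] using hsum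

/-- The vector `∑ i, l⁻ⁱ uᵢ gᵢ`. When `u` is `L`-periodic and `g` is a Jordan chain of `B`, it is a
fixed point of `(l • B) ^ L`. -/
noncomputable def periodicVector (g : ℕ → X) (l : ℝ) (u : ℕ → ℂ) : X :=
  ∑' i, (((l : ℂ) ^ i)⁻¹ * u i) • g i

lemma IsJordanChain.hasSum_smul_pow_apply_tsum_sub_periodicVector (hg : IsJordanChain B g)
    {y u : ℕ → ℂ} {l : ℝ} (hy : Summable fun i => y i • g i)
    (hu : Summable fun i => (((l : ℂ) ^ i)⁻¹ * u i) • g i) (n : ℕ) :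
    HasSum (fun k => ((l : ℂ) ^ n * y (k + n) - ((l : ℂ) ^ k)⁻¹ * u k) • g k)
      ((((l : ℂ) • B) ^ n) (∑' i, y i • g i) - periodicVector g l u) := by
  rw [smul_pow, _root_.smul_apply]
  simpa only [periodicVector, sub_smul, mul_smul] using
    ((hg.hasSum_pow_apply_tsum hy n).const_smul ((l : ℂ) ^ n)).sub hu.hasSum

variable {C ρ a b : ℝ}

lemma summable_natCast_mul_inv_pow_mul (hρ : 0 ≤ ρ) (hρa : ρ < a) (C : ℝ) :
    Summable fun i : ℕ => i * (a ^ i)⁻¹ * (C * ρ ^ i) := by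
  have hratio : ‖ρ / a‖ < 1 := by
    rwa [Real.norm_of_nonneg (div_nonneg hρ (hρ.trans hρa.le)), div_lt_one (hρ.trans_lt hρa)]
  have hgeom := (summable_pow_mul_geometric_of_norm_lt_one 1 hratio).mul_left C
  refine hgeom.congr fun i => ?_
  rw [div_pow, pow_one, div_eq_mul_inv]
  ring

lemma summable_norm_smul_of_eventually_norm_le (hg : ∀ i, ‖g i‖ ≤ C * ρ ^ i)
    (hρ : 0 ≤ ρ) (hρa : ρ < a) {y : ℕ → ℂ}
    (hy : ∀ᶠ i : ℕ in atTop, ‖y i‖ ≤ i * (a ^ i)⁻¹) :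
    Summable fun i => ‖y i • g i‖ := by
  refine Summable.of_norm_bounded_eventually_nat
    (summable_natCast_mul_inv_pow_mul hρ hρa C) ?_
  filter_upwards [hy] with i hi
  rw [norm_norm, norm_smul]
  exact mul_le_mul hi (hg i) (norm_nonneg _) ((norm_nonneg _).trans hi)

lemma norm_inv_pow_mul_le {l : ℝ} (ha : 0 < a) (hl : a ≤ l) (z : ℂ) (i : ℕ) :
    ‖((l : ℂ) ^ i)⁻¹ * z‖ ≤ ‖z‖ * (a ^ i)⁻¹ := by
  rw [norm_mul, norm_inv, norm_pow, Complex.norm_of_nonneg (ha.le.trans hl), mul_comm]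
  gcongr

lemma exists_nat_forall_norm_le_of_periodic {u : ℕ → ℂ} {L : ℕ} (hL : 0 < L)
    (hu : Function.Periodic u L) : ∃ c : ℕ, ∀ i, ‖u i‖ ≤ c := by
  obtain ⟨c, hc⟩ := exists_nat_ge (∑ i ∈ Finset.range L, ‖u i‖)
  refine ⟨c, fun i => ?_⟩
  rw [← hu.map_mod_nat]
  exact (Finset.single_le_sum (f := fun i => ‖u i‖) (fun _ _ => norm_nonneg _)
    (Finset.mem_range.2 (Nat.mod_lt i hL))).trans hc

lemma exists_pow_mul_inv_pow_mul_pow_le (hρ : 0 < ρ) (hρa : ρ < a) (b : ℝ) :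
    ∃ η : ℝ, 0 < η ∧ η < 1 ∧ ∃ M : ℕ, ∀ l : ℝ, 0 ≤ l → l ≤ b → ∀ n k : ℕ, M * n ≤ k + n →
      l ^ n * (a ^ (k + n))⁻¹ * ρ ^ k ≤ η ^ (k + n) := by
  have ha : 0 < a := hρ.trans hρa
  obtain ⟨η, hη, hη1⟩ := exists_between ((div_lt_one ha).2 hρa)
  have hη0 : 0 < η := (div_pos hρ ha).trans hη
  have hgrowth : 1 < η * a / ρ := (one_lt_div hρ).2 ((div_lt_iff₀ ha).1 hη)
  obtain ⟨M, hM⟩ := pow_unbounded_of_one_lt (b / ρ) hgrowth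
  refine ⟨η, hη0, hη1, M, fun l hl0 hlb n k hMn => ?_⟩
  calc
    l ^ n * (a ^ (k + n))⁻¹ * ρ ^ k = (l / ρ) ^ n * (ρ / a) ^ (k + n) := by
      simp only [div_pow, pow_add]
      field_simp
    _ ≤ ((η * a / ρ) ^ M) ^ n * (ρ / a) ^ (k + n) := by
      gcongr
      exact ((div_le_div_iff_of_pos_right hρ).2 hlb).trans hM.le
    _ ≤ (η * a / ρ) ^ (k + n) * (ρ / a) ^ (k + n) := by
      rw [← pow_mul]
      gcongr
      exact hgrowth.le
    _ = η ^ (k + n) := by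
      rw [← mul_pow]
      congr 1
      field_simp

/-- The sequence which on the indices `i` with `φ i = j` follows the coefficients of
`periodicVector g (l j) (u j)`. Coefficients `u j i` larger than `i` are discarded, which makes the
growth uniform in `j` and affects only finitely many indices when `u j` is bounded. -/
noncomputable def splice {ι : Type*} (φ : ℕ → ι) (l : ι → ℝ) (u : ι → ℕ → ℂ) (i : ℕ) : ℂ :=
  if ‖u (φ i) i‖ ≤ i then ((l (φ i) : ℂ) ^ i)⁻¹ * u (φ i) i else 0

section Splice

variable {ι : Type*} {φ : ℕ → ι} {l : ι → ℝ} {u : ι → ℕ → ℂ}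

lemma norm_splice_le (ha : 0 < a) (hl : ∀ j, a ≤ l j) (i : ℕ) :
    ‖splice φ l u i‖ ≤ i * (a ^ i)⁻¹ := by
  rw [splice]
  split_ifs with h
  · exact (norm_inv_pow_mul_le ha (hl _) _ _).trans (by gcongr)
  · rw [norm_zero]
    positivity

lemma pow_mul_splice_add_eq {j : ι} {n k : ℕ} (hlj : l j ≠ 0) (hφ : φ (k + n) = j)
    (hper : u j (k + n) = u j k) (hbd : ‖u j k‖ ≤ n) :
    (l j : ℂ) ^ n * splice φ l u (k + n) = ((l j : ℂ) ^ k)⁻¹ * u j k := by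
  have hle : ‖u (φ (k + n)) (k + n)‖ ≤ (k + n : ℕ) := by
    rw [hφ, hper]
    exact hbd.trans (Nat.cast_le.2 (Nat.le_add_left _ _))
  have hlj' : (l j : ℂ) ≠ 0 := Complex.ofReal_ne_zero.2 hlj
  rw [splice, if_pos hle, hφ, hper, pow_add]
  field_simp

lemma norm_pow_mul_splice_add_sub_le (ha : 0 < a) (hl : ∀ j, a ≤ l j) {j : ι} {n k : ℕ}
    (hbd : ‖u j k‖ ≤ n) :
    ‖(l j : ℂ) ^ n * splice φ l u (k + n) - ((l j : ℂ) ^ k)⁻¹ * u j k‖ ≤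
      2 * (k + n : ℕ) * (l j ^ n * (a ^ (k + n))⁻¹) := by
  have hlj : 0 < l j := ha.trans_le (hl j)
  have hsplice : ‖(l j : ℂ) ^ n * splice φ l u (k + n)‖ ≤
      (k + n : ℕ) * (l j ^ n * (a ^ (k + n))⁻¹) := by
    rw [norm_mul, norm_pow, Complex.norm_of_nonneg hlj.le, mul_left_comm]
    gcongr
    exact norm_splice_le ha hl _
  have hperiodic : ‖((l j : ℂ) ^ k)⁻¹ * u j k‖ ≤ (k + n : ℕ) * (l j ^ n * (a ^ (k + n))⁻¹) := by
    rw [norm_mul, norm_inv, norm_pow, Complex.norm_of_nonneg hlj.le, mul_comm]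
    refine mul_le_mul (hbd.trans (Nat.cast_le.2 (Nat.le_add_left _ _))) ?_
      (by positivity) (by positivity)
    calc
      (l j ^ k)⁻¹ = l j ^ n * (l j ^ (k + n))⁻¹ := by rw [pow_add]; field_simp
      _ ≤ l j ^ n * (a ^ (k + n))⁻¹ := by gcongr; exact hl j
  linarith [norm_sub_le ((l j : ℂ) ^ n * splice φ l u (k + n)) (((l j : ℂ) ^ k)⁻¹ * u j k)]

lemma norm_pow_mul_splice_add_sub_smul_le {η : ℝ} {M n L c k : ℕ} {j : ι}
    (hg : ∀ i, ‖g i‖ ≤ C * ρ ^ i) (ha : 0 < a) (hl : ∀ j, a ≤ l j) (hη : 0 ≤ η)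
    (hM : M * n ≤ k + n → l j ^ n * (a ^ (k + n))⁻¹ * ρ ^ k ≤ η ^ (k + n))
    (hper : Function.Periodic (u j) L) (hc : ∀ i, ‖u j i‖ ≤ c) (hcn : c ≤ n) (hLn : L ∣ n)
    (hφ : ∀ i ∈ Set.Ico n (M * n), φ i = j) :
    ‖((l j : ℂ) ^ n * splice φ l u (k + n) - ((l j : ℂ) ^ k)⁻¹ * u j k) • g k‖ ≤
      2 * C * ((k + n : ℕ) * η ^ (k + n)) := by
  have hC : 0 ≤ C := by simpa using (norm_nonneg (g 0)).trans (hg 0)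
  have hbd : ‖u j k‖ ≤ n := (hc k).trans (Nat.cast_le.2 hcn)
  obtain hlt | hle := lt_or_ge (k + n) (M * n)
  · have hper' : u j (k + n) = u j k := by
      obtain ⟨d, rfl⟩ := hLn
      rw [mul_comm L d]
      exact hper.nat_mul d k
    rw [pow_mul_splice_add_eq (ha.trans_le (hl j)).ne' (hφ _ ⟨Nat.le_add_left n k, hlt⟩) hper' hbd,
      sub_self, zero_smul, norm_zero]
    positivity
  · rw [norm_smul]
    calc
      _ ≤ 2 * (k + n : ℕ) * (l j ^ n * (a ^ (k + n))⁻¹) * (C * ρ ^ k) :=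
        mul_le_mul (norm_pow_mul_splice_add_sub_le ha hl hbd) (hg k) (norm_nonneg _) (by
          have := ha.trans_le (hl j)
          positivity)
      _ = 2 * C * ((k + n : ℕ) * (l j ^ n * (a ^ (k + n))⁻¹ * ρ ^ k)) := by ring
      _ ≤ 2 * C * ((k + n : ℕ) * η ^ (k + n)) := by
        gcongr
        exact hM hle

theorem exists_forall_lowerDensity_norm_sub_periodicVector_lt_pos [CompleteSpace X] [Countable ι]
    [Nonempty ι] (hg : IsJordanChain B g) (hgC : ∀ i, ‖g i‖ ≤ C * ρ ^ i) (hρ : 0 < ρ)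
    (hρa : ρ < a) (hl : ∀ j, l j ∈ Set.Icc a b)
    (hu : ∀ j, ∃ L > 0, Function.Periodic (u j) L) :
    ∃ x, ∀ j, ∀ ε > 0, 0 < lowerDensity
      {n | ‖(((l j : ℂ) • B) ^ n) x - periodicVector g (l j) (u j)‖ < ε} := by
  have ha : 0 < a := hρ.trans hρa
  have hla : ∀ j, a ≤ l j := fun j => (hl j).1
  obtain ⟨η, hη0, hη1, M, hM⟩ := exists_pow_mul_inv_pow_mul_pow_le hρ hρa b
  obtain ⟨φ, hφ⟩ := exists_forall_lowerDensity_eq_on_Ico_mul_pos ι M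
  have hsplice : Summable fun i => splice φ l u i • g i :=
    (summable_norm_smul_of_eventually_norm_le hgC hρ.le hρa
      (Eventually.of_forall (norm_splice_le ha hla))).of_norm
  have hgeom : Summable fun i : ℕ => 2 * C * (i * η ^ i) := by
    simpa using (summable_pow_mul_geometric_of_norm_lt_one 1
      (by rwa [Real.norm_of_nonneg hη0.le])).mul_left (2 * C)
  refine ⟨∑' i, splice φ l u i • g i, fun j ε hε => ?_⟩
  obtain ⟨L, hL, hper⟩ := hu j
  obtain ⟨c, hc⟩ := exists_nat_forall_norm_le_of_periodic hL hper
  have hperiodic : Summable fun i => (((l j : ℂ) ^ i)⁻¹ * u j i) • g i := by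
    refine (summable_norm_smul_of_eventually_norm_le hgC hρ.le hρa ?_).of_norm
    filter_upwards [eventually_ge_atTop c] with i hi
    refine (norm_inv_pow_mul_le ha (hla j) _ _).trans ?_
    gcongr
    exact (hc i).trans (Nat.cast_le.2 hi)
  refine (hφ j L hL).trans_le (lowerDensity_mono_of_eventually ?_)
  filter_upwards [eventually_ge_atTop c,
    (tendsto_sum_nat_add fun i : ℕ => 2 * C * (i * η ^ i)).eventually_lt_const hε]
    with n hcn htail
  rintro ⟨hLn, hφn⟩
  refine ((hg.hasSum_smul_pow_apply_tsum_sub_periodicVector hsplice hperiodic n).norm_le_of_bounded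
    ((summable_nat_add_iff n).2 hgeom).hasSum fun k => ?_).trans_lt htail
  exact norm_pow_mul_splice_add_sub_smul_le hgC ha hla hη0.le
    (hM _ (ha.le.trans (hla j)) (hl j).2 n k) hper hc hcn hLn hφn

end Splice

lemma tendsto_periodicVector_mod [CompleteSpace X] (hg : ∀ i, ‖g i‖ ≤ C * ρ ^ i) (hρ : 0 < ρ)
    {l : ℝ} (hρl : ρ < l) (c : ℕ →₀ ℂ) :
    Tendsto (fun L => periodicVector g l fun i => (l : ℂ) ^ (i % L) * c (i % L)) atTop
      (𝓝 (c.sum fun i z => z • g i)) := by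
  have hl : 0 < l := hρ.trans hρl
  obtain ⟨K, hK⟩ := exists_nat_ge (∑ i ∈ c.support, ‖(l : ℂ) ^ i * c i‖)
  have hcK : ∀ i, ‖(l : ℂ) ^ i * c i‖ ≤ K := fun i => by
    by_cases hi : i ∈ c.support
    · exact (Finset.single_le_sum (f := fun i => ‖(l : ℂ) ^ i * c i‖)
        (fun _ _ => norm_nonneg _) hi).trans hK
    · simp [Finsupp.notMem_support_iff.1 hi]
  have hlimit : c.sum (fun i z => z • g i) = ∑' i, c i • g i :=
    (tsum_eq_sum fun i hi => by simp only [Finsupp.notMem_support_iff.1 hi, zero_smul]).symm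
  have hbound : Summable fun i : ℕ => ‖(K * ((l : ℂ) ^ i)⁻¹) • g i‖ := by
    refine summable_norm_smul_of_eventually_norm_le hg hρ.le hρl ?_
    filter_upwards [eventually_ge_atTop K] with i hi
    rw [mul_comm]
    refine (norm_inv_pow_mul_le hl le_rfl _ _).trans ?_
    rw [Complex.norm_natCast]
    gcongr
  rw [hlimit]
  refine tendsto_tsum_of_dominated_convergence hbound (fun i => ?_)
    (Eventually.of_forall fun L i => ?_)
  · refine tendsto_const_nhds.congr' ?_
    filter_upwards [eventually_gt_atTop i] with L hL
    rw [Nat.mod_eq_of_lt hL, inv_mul_cancel_left₀]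
    exact pow_ne_zero _ (Complex.ofReal_ne_zero.2 hl.ne')
  · rw [norm_smul, norm_smul, mul_comm (K : ℂ), norm_mul, norm_mul _ (K : ℂ),
      Complex.norm_natCast]
    gcongr
    exact hcK _

lemma dense_periodicVector [CompleteSpace X] (hg : ∀ i, ‖g i‖ ≤ C * ρ ^ i) (hρ : 0 < ρ)
    (hspan : Dense (Submodule.span ℂ (Set.range g) : Set X)) {l : ℝ} (hρl : ρ < l) :
    Dense {v | ∃ u, (∃ L > 0, Function.Periodic u L) ∧ periodicVector g l u = v} := by
  refine dense_closure.1 (hspan.mono fun v hv => ?_)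
  obtain ⟨c, rfl⟩ := Finsupp.mem_span_range_iff_exists_finsupp.1 hv
  refine mem_closure_of_tendsto (tendsto_periodicVector_mod hg hρ hρl c) ?_
  filter_upwards [eventually_gt_atTop 0] with L hL
  exact ⟨_, ⟨L, hL, fun i => by simp only [Nat.add_mod_right]⟩, rfl⟩

theorem iInter_FHC_nonempty_of_isJordanChain [CompleteSpace X] (hg : IsJordanChain B g)
    (hgC : ∀ i, ‖g i‖ ≤ C * ρ ^ i) (hspan : Dense (Submodule.span ℂ (Set.range g) : Set X))
    (hρ : 0 < ρ) (hρa : ρ < a) {Λ : Set ℝ} (hΛ : Λ.Countable) (hΛab : Λ ⊆ Set.Icc a b) :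
    (⋂ l ∈ Λ, FHC ((l : ℂ) • B)).Nonempty := by
  obtain rfl | ⟨l₀, hl₀⟩ := Λ.eq_empty_or_nonempty
  · simp
  have hsep : TopologicalSpace.SeparableSpace X := by
    rw [← TopologicalSpace.isSeparable_univ_iff, ← hspan.closure_eq]
    exact ((Set.countable_range g).isSeparable.span (R := ℂ)).closure
  have := UniformSpace.secondCountable_of_separable X
  have hdense : ∀ l : Λ, ∃ D : Set X, D.Countable ∧ Dense D ∧
      ∀ v ∈ D, ∃ u, (∃ L > 0, Function.Periodic u L) ∧ periodicVector g l u = v := fun l => by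
    obtain ⟨D, hDsub, hDcount, hD⟩ :=
      (dense_periodicVector hgC hρ hspan (hρa.trans_le (hΛab l.2).1)).exists_countable_dense_subset
    exact ⟨D, hDcount, hD, hDsub⟩
  choose D hDcount hD u hu huv using hdense
  have := hΛ.to_subtype
  have := fun l => (hDcount l).to_subtype
  have : Nonempty (Σ l, D l) := ⟨⟨l₀, hl₀⟩, (hD _).nonempty.to_subtype.some⟩
  obtain ⟨x, hx⟩ := exists_forall_lowerDensity_norm_sub_periodicVector_lt_pos
    (l := fun j : Σ l, D l => j.1) (u := fun j => u j.1 j.2 j.2.2) hg hgC hρ hρa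
    (fun j => hΛab j.1.2) (fun j => hu _ _ _)
  refine ⟨x, Set.mem_iInter₂.2 fun l hl U hU hUne => ?_⟩
  obtain ⟨v, hvU, hvD⟩ := (hD ⟨l, hl⟩).inter_open_nonempty U hU hUne
  obtain ⟨ε, hε, hball⟩ := Metric.isOpen_iff.1 hU v hvU
  refine (hx ⟨⟨l, hl⟩, v, hvD⟩ ε hε).trans_le
    (lowerDensity_mono_of_eventually (Eventually.of_forall fun n hn => hball ?_))
  rw [mem_ball_iff_norm, ← huv ⟨l, hl⟩ v hvD]
  exact hn

end JordanChain

instance {α : Type*} {E : α → Type*} [∀ i, NormedAddCommGroup (E i)] [Nonempty α]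
    [∀ i, Nontrivial (E i)] {p : ℝ≥0∞} : Nontrivial (lp E p) := by
  classical
  obtain ⟨i⟩ := ‹Nonempty α›
  obtain ⟨v, hv⟩ := exists_ne (0 : E i)
  refine ⟨⟨lp.single p i v, 0, fun h => hv ?_⟩⟩
  simpa only [lp.single_apply_self, lp.coeFn_zero, Pi.zero_apply] using
    congrArg (fun x : lp E p => x i) h

section WeightedShift

variable {p : ℝ≥0∞} [Fact (1 ≤ p)] {w : ℕ → ℂ}

/-- The product `w₁ ⋯ wₙ`. The vectors `(w₁ ⋯ wₙ)⁻¹ eₙ` are mapped to each other by the backward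
shift with weights `w`, in which `w 0` does not occur. -/
noncomputable def weightProd (w : ℕ → ℂ) (n : ℕ) : ℂ :=
  ∏ k ∈ Finset.Icc 1 n, w k

lemma weightProd_succ (w : ℕ → ℂ) (n : ℕ) : weightProd w (n + 1) = weightProd w n * w (n + 1) :=
  Finset.prod_Icc_succ_top (by omega) w

lemma weightProd_ne_zero (hw : ∀ n, 1 ≤ n → w n ≠ 0) (n : ℕ) : weightProd w n ≠ 0 :=
  Finset.prod_ne_zero_iff.2 fun k hk => hw k (Finset.mem_Icc.1 hk).1

lemma exists_forall_norm_inv_weightProd_le (hw : ∀ n, 1 ≤ n → w n ≠ 0) {ρ : ℝ≥0}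
    (hρ : rpwInv w < ρ) : ∃ C : ℝ, ∀ n, ‖(weightProd w n)⁻¹‖ ≤ C * ρ ^ n := by
  refine exists_forall_le_mul_pow_of_limsup_lt (u := fun n => ‖(weightProd w n)⁻¹‖₊) ?_
  convert hρ using 1
  refine congrArg (limsup · atTop) (funext fun n => ?_)
  rw [nnnorm_inv, ENNReal.coe_inv (nnnorm_ne_zero_iff.2 (weightProd_ne_zero hw n)), weightProd,
    nnnorm_prod, ENNReal.ofNNReal_finsetProd]

lemma isJordanChain_single_inv_weightProd (hw : ∀ n, 1 ≤ n → w n ≠ 0)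
    {B : lp (fun _ : ℕ => ℂ) p →L[ℂ] lp (fun _ : ℕ => ℂ) p}
    (hB : ∀ x : lp (fun _ : ℕ => ℂ) p, ∀ n : ℕ, (B x) n = w (n + 1) * x (n + 1)) :
    IsJordanChain B fun n => lp.single p n (weightProd w n)⁻¹ where
  map_zero := by
    ext n
    simp [hB]
  map_succ n := by
    ext m
    obtain rfl | hmn := eq_or_ne m n
    · rw [hB, lp.single_apply_self, lp.single_apply_self, weightProd_succ, mul_inv_rev,
        mul_inv_cancel_left₀ (hw _ (Nat.le_add_left 1 m))]
    · rw [hB, lp.single_apply_ne _ _ _ (by omega), lp.single_apply_ne _ _ _ hmn, mul_zero]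

lemma dense_span_range_single (hp : p ≠ ⊤) {c : ℕ → ℂ} (hc : ∀ n, c n ≠ 0) :
    Dense (Submodule.span ℂ (Set.range fun n => (lp.single p n (c n) : lp (fun _ : ℕ => ℂ) p)) :
      Set (lp (fun _ : ℕ => ℂ) p)) := fun x => by
  refine mem_closure_of_tendsto (lp.hasSum_single hp x)
    (Eventually.of_forall fun s => Submodule.sum_mem _ fun n _ => ?_)
  have hscale : lp.single p n (x n) =
      (x n / c n) • (lp.single p n (c n) : lp (fun _ : ℕ => ℂ) p) := by
    rw [← lp.single_smul, smul_eq_mul, div_mul_cancel₀ _ (hc n)]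
  rw [hscale]
  exact Submodule.smul_mem _ _ (Submodule.subset_span ⟨n, rfl⟩)

theorem iInter_FHC_nonempty_of_isCompact_closure (hp : p ≠ ⊤) (hw : ∀ n, 1 ≤ n → w n ≠ 0)
    {B : lp (fun _ : ℕ => ℂ) p →L[ℂ] lp (fun _ : ℕ => ℂ) p}
    (hB : ∀ x : lp (fun _ : ℕ => ℂ) p, ∀ n : ℕ, (B x) n = w (n + 1) * x (n + 1))
    {Λ : Set ℝ} (hne : Λ.Nonempty) (hΛ : Λ.Countable) (hcompact : IsCompact (closure Λ))
    (hΛw : closure Λ ⊆ {l : ℝ | rpwInv w < ENNReal.ofReal l}) :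
    (⋂ l ∈ Λ, FHC ((l : ℂ) • B)).Nonempty := by
  obtain ⟨a, haΛ, ha⟩ := hcompact.exists_isLeast hne.closure
  obtain ⟨b, hb⟩ := hcompact.bddAbove
  obtain ⟨ρ, hwρ, hρa⟩ := ENNReal.lt_iff_exists_nnreal_btwn.1 (hΛw haΛ)
  rw [← ENNReal.ofReal_coe_nnreal, ENNReal.ofReal_lt_ofReal_iff_of_nonneg ρ.coe_nonneg] at hρa
  obtain ⟨C, hC⟩ := exists_forall_norm_inv_weightProd_le hw hwρ
  refine iInter_FHC_nonempty_of_isJordanChain (C := C)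
    (isJordanChain_single_inv_weightProd hw hB) (fun n => ?_)
    (dense_span_range_single hp fun n => inv_ne_zero (weightProd_ne_zero hw n))
    (ENNReal.coe_pos.1 (pos_of_gt hwρ)) hρa hΛ
    fun l hl => ⟨ha (subset_closure hl), hb (subset_closure hl)⟩
  rw [lp.norm_single (one_pos.trans_le Fact.out)]
  exact hC n

end WeightedShift

/-- Corollary 2.24 for weighted backward shifts on `ℓ^p(ℕ)`, encoded as a bounded
operator `B` with `(B x) n = w (n+1) * x (n+1)`. -/
theorem stmt9 (p : ℝ≥0∞) [Fact (1 ≤ p)] (hp : p ≠ ⊤)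
    (w : ℕ → ℂ) (hw0 : ∀ n : ℕ, 1 ≤ n → w n ≠ 0)
    (hwbdd : ∃ A : ℝ, ∀ n : ℕ, ‖w n‖ ≤ A)
    (B : lp (fun _ : ℕ => ℂ) p →L[ℂ] lp (fun _ : ℕ => ℂ) p)
    (hB : ∀ x : lp (fun _ : ℕ => ℂ) p, ∀ n : ℕ, (B x) n = w (n + 1) * x (n + 1))
    (Λ : Set ℝ) (hΛpos : Λ ⊆ Set.Ioi (0 : ℝ)) (hne : Λ.Nonempty) :
    -- (1) nonempty intersection for countable Λ relatively compact in (r_{p,w}⁻¹, +∞)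
    ((Λ.Countable ∧ IsCompact (closure Λ) ∧
        closure Λ ⊆ {l : ℝ | rpwInv w < ENNReal.ofReal l}) →
      (⋂ l ∈ Λ, FHC ((l : ℂ) • B)).Nonempty) ∧
    -- (2) empty intersection if Λ is unbounded, or has two elements and r(B_w)⁻¹ ≥ inf Λ
    ((¬ BddAbove Λ ∨
        ((∃ a ∈ Λ, ∃ b ∈ Λ, a ≠ b) ∧
          ENNReal.ofReal (sInf Λ) ≤ (spectralRadius ℂ B)⁻¹)) →
      ⋂ l ∈ Λ, FHC ((l : ℂ) • B) = ∅) ∧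
    -- In particular: if r_{p,w} = r(B_w) and Λ has at least two elements
    (((rpwInv w)⁻¹ = spectralRadius ℂ B → (∃ a ∈ Λ, ∃ b ∈ Λ, a ≠ b) →
      ((⋂ l ∈ Λ, FHC ((l : ℂ) • B)).Nonempty ↔
        (Λ.Countable ∧ IsCompact (closure Λ) ∧
          closure Λ ⊆ {l : ℝ | rpwInv w < ENNReal.ofReal l})))) := by
  have hpart₁ : (Λ.Countable ∧ IsCompact (closure Λ) ∧
      closure Λ ⊆ {l : ℝ | rpwInv w < ENNReal.ofReal l}) →
      (⋂ l ∈ Λ, FHC ((l : ℂ) • B)).Nonempty := fun ⟨hΛ, hcompact, hΛw⟩ =>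
    iInter_FHC_nonempty_of_isCompact_closure hp hw0 hB hne hΛ hcompact hΛw
  refine ⟨hpart₁, fun h => Set.eq_empty_iff_forall_notMem.2 fun x hx => ?_,
    fun hr hΛ₂ => ⟨fun ⟨x, hx⟩ => ?_, hpart₁⟩⟩
  · obtain hunbdd | ⟨hΛ₂, hle⟩ := h
    · exact hunbdd (bddAbove_of_mem_iInter_FHC hΛpos hx)
    · exact hle.not_gt (inv_spectralRadius_lt_ofReal_sInf_of_mem_iInter_FHC hΛpos hΛ₂ hx)
  · obtain ⟨b, hb⟩ := bddAbove_of_mem_iInter_FHC hΛpos hx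
    have hinf := inv_spectralRadius_lt_ofReal_sInf_of_mem_iInter_FHC hΛpos hΛ₂ hx
    rw [← hr, inv_inv] at hinf
    have hbelow : BddBelow Λ := ⟨0, fun l hl => (hΛpos hl).le⟩
    have hclosure : closure Λ ⊆ Set.Icc (sInf Λ) b :=
      closure_minimal (fun l hl => ⟨csInf_le hbelow hl, hb hl⟩) isClosed_Icc
    exact ⟨countable_of_mem_iInter_FHC hΛpos hx,
      isCompact_Icc.of_isClosed_subset isClosed_closure hclosure,
      fun l hl => hinf.trans_le (ENNReal.ofReal_le_ofReal (hclosure hl).1)⟩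
end
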